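/- arXiv:math/0504077 — 9 statements merged into one kernel-verified Lean document; each statement's English description precedes it below -/
import Mathlib

section
/- Let t ≥ 2. Let A' be the (t−1)×(t+c−2) matrix obtained from A by deleting its last row and last column, and let B be the t×(t+c−2) matrix obtained from A by deleting its last column. Then I(A) = I(B) + x_c^{u_{t+c−1,t}}·I(A') as ideals of R, where x_c^{u_{t+c−1,t}}·I(A') denotes the ideal generated by the products of x_c^{u_{t+c−1,t}} with the elements of I(A'). -/
open MvPolynomial Matrix

/-- The ideal generated by the maximal (`p × p`) minors of a `p × q` matrix
(determinants of the square submatrices obtained by choosing `p` of the `q` columns). -/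
noncomputable def maximalMinors {S : Type*} [CommRing S] {p q : ℕ}
    (M : Matrix (Fin p) (Fin q) S) : Ideal S :=
  Ideal.span {d : S | ∃ g : Fin p ↪ Fin q, d = (M.submatrix id g).det}

/-!
Only the last entry of the last column of `A` is nonzero, and it equals `x_c ^ u_{t+c-1,t}`. A
maximal minor of `A` that avoids this column is a maximal minor of `B`; one that uses it is, by
Laplace expansion along it, `± x_c ^ u_{t+c-1,t}` times a maximal minor of `A'`. Conversely, every
such product arises this way, by adjoining the last column to the columns of the minor of `A'`.
-/

section Minors

variable {S : Type*} [CommRing S]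

theorem det_eq_of_column_eq_zero {n : ℕ} (N : Matrix (Fin (n + 1)) (Fin (n + 1)) S)
    (i₀ j₀ : Fin (n + 1)) (hN : ∀ i ≠ i₀, N i j₀ = 0) :
    N.det = (-1) ^ (i₀ + j₀ : ℕ) *
      (N i₀ j₀ * (N.submatrix i₀.succAbove j₀.succAbove).det) := by
  rw [det_succ_column N j₀, Fintype.sum_eq_single i₀ fun i hi => by simp [hN i hi], mul_assoc]

theorem det_submatrix_mem_maximalMinors {p q : ℕ} (M : Matrix (Fin p) (Fin q) S)
    (g : Fin p → Fin q) : (M.submatrix id g).det ∈ maximalMinors M := by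
  by_cases hg : Function.Injective g
  · exact Ideal.subset_span ⟨⟨g, hg⟩, rfl⟩
  · obtain ⟨a, b, hab, hne⟩ := Function.not_injective_iff.mp hg
    rw [det_zero_of_column_eq hne fun i => by simp [hab]]
    exact zero_mem _

theorem maximalMinors_le_iff {p q : ℕ} {M : Matrix (Fin p) (Fin q) S} {I : Ideal S} :
    maximalMinors M ≤ I ↔ ∀ g : Fin p → Fin q, (M.submatrix id g).det ∈ I := by
  refine ⟨fun h g => h (det_submatrix_mem_maximalMinors M g), fun h => Ideal.span_le.mpr ?_⟩
  rintro _ ⟨g, rfl⟩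
  exact h g

theorem span_singleton_mul_maximalMinors_le_iff {p q : ℕ} {a : S}
    {M : Matrix (Fin p) (Fin q) S} {I : Ideal S} :
    Ideal.span {a} * maximalMinors M ≤ I ↔
      ∀ g : Fin p → Fin q, a * (M.submatrix id g).det ∈ I := by
  rw [Ideal.span_singleton_mul_le_iff]
  exact maximalMinors_le_iff (I := Submodule.comap (LinearMap.mulLeft S a) I)

theorem maximalMinors_submatrix_id_le {p q r : ℕ} (M : Matrix (Fin p) (Fin q) S)
    (f : Fin r → Fin q) : maximalMinors (M.submatrix id f) ≤ maximalMinors M :=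
  maximalMinors_le_iff.mpr fun g => det_submatrix_mem_maximalMinors M (f ∘ g)

theorem det_submatrix_mem_maximalMinors_of_forall_ne {p q : ℕ}
    (M : Matrix (Fin p) (Fin (q + 1)) S) {j₀ : Fin (q + 1)} {g : Fin p → Fin (q + 1)}
    (hg : ∀ x, g x ≠ j₀) :
    (M.submatrix id g).det ∈ maximalMinors (M.submatrix id j₀.succAbove) := by
  choose g' hg' using fun x => Fin.exists_succAbove_eq (hg x)
  obtain rfl : j₀.succAbove ∘ g' = g := funext hg'
  exact det_submatrix_mem_maximalMinors (M.submatrix id j₀.succAbove) g'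

section SupportedColumn

variable {p q : ℕ} {M : Matrix (Fin (p + 1)) (Fin (q + 1)) S} {i₀ : Fin (p + 1)} {j₀ : Fin (q + 1)}

theorem det_submatrix_eq_of_column_eq_zero (hM : ∀ i ≠ i₀, M i j₀ = 0)
    {g : Fin (p + 1) → Fin (q + 1)} {r : Fin (p + 1)} (hr : g r = j₀) :
    (M.submatrix id g).det = (-1) ^ (i₀ + r : ℕ) *
      (M i₀ j₀ * (M.submatrix i₀.succAbove (g ∘ r.succAbove)).det) := by
  rw [det_eq_of_column_eq_zero (M.submatrix id g) i₀ r (by simpa [hr] using hM)]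
  simp [hr, Function.comp_def]

theorem maximalMinors_le_sup_of_column_eq_zero (hM : ∀ i ≠ i₀, M i j₀ = 0) :
    maximalMinors M ≤ maximalMinors (M.submatrix id j₀.succAbove) ⊔
      Ideal.span {M i₀ j₀} * maximalMinors (M.submatrix i₀.succAbove j₀.succAbove) := by
  rw [maximalMinors, Ideal.span_le]
  rintro _ ⟨g, rfl⟩
  by_cases hg : ∃ r, g r = j₀
  · obtain ⟨r, hr⟩ := hg
    have hne (x : Fin p) : (g ∘ r.succAbove) x ≠ j₀ := fun hx =>
      Fin.succAbove_ne r x (g.injective (hx.trans hr.symm))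
    rw [det_submatrix_eq_of_column_eq_zero hM hr]
    exact Ideal.mem_sup_right <| Ideal.mul_mem_left _ _ <|
      Ideal.mul_mem_mul (Ideal.mem_span_singleton_self _) <|
        det_submatrix_mem_maximalMinors_of_forall_ne (M.submatrix i₀.succAbove id) hne
  · exact Ideal.mem_sup_left <|
      det_submatrix_mem_maximalMinors_of_forall_ne M (not_exists.mp hg)

theorem span_singleton_mul_maximalMinors_le_of_column_eq_zero (hM : ∀ i ≠ i₀, M i j₀ = 0) :
    Ideal.span {M i₀ j₀} * maximalMinors (M.submatrix i₀.succAbove j₀.succAbove) ≤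
      maximalMinors M := by
  refine span_singleton_mul_maximalMinors_le_iff.mpr fun g => ?_
  have hdet := det_submatrix_eq_of_column_eq_zero hM
    (g := Fin.cons j₀ (j₀.succAbove ∘ g)) (r := 0) (Fin.cons_zero _ _)
  have hsign : IsUnit ((-1 : S) ^ (i₀ + (0 : Fin (p + 1)) : ℕ)) := isUnit_one.neg.pow _
  exact (Ideal.unit_mul_mem_iff_mem _ hsign).mp
    (hdet ▸ det_submatrix_mem_maximalMinors M _)

theorem maximalMinors_eq_sup_of_column_eq_zero (hM : ∀ i ≠ i₀, M i j₀ = 0) :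
    maximalMinors M = maximalMinors (M.submatrix id j₀.succAbove) ⊔
      Ideal.span {M i₀ j₀} * maximalMinors (M.submatrix i₀.succAbove j₀.succAbove) :=
  (maximalMinors_le_sup_of_column_eq_zero hM).antisymm <|
    sup_le (maximalMinors_submatrix_id_le M _)
      (span_singleton_mul_maximalMinors_le_of_column_eq_zero hM)

end SupportedColumn

-- The sizes are tied by equations because `t + c - 1` is not definitionally a successor.
theorem maximalMinors_eq_sup_of_last_column_eq_zero {m n p q : ℕ} (hp : p = m + 1)
    (hq : q = n + 1) (M : Matrix (Fin p) (Fin q) S)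
    (hM : ∀ i : Fin p, i.1 < m → M i ⟨n, by omega⟩ = 0) :
    maximalMinors M = maximalMinors (M.submatrix id (Fin.castLE (show n ≤ q by omega))) ⊔
      Ideal.span {M ⟨m, by omega⟩ ⟨n, by omega⟩} *
        maximalMinors (M.submatrix (Fin.castLE (show m ≤ p by omega))
          (Fin.castLE (show n ≤ q by omega))) := by
  subst hp hq
  have hlast (i : Fin (m + 1)) (hi : i ≠ Fin.last m) : M i (Fin.last n) = 0 :=
    hM i (Fin.val_lt_last hi)
  have hsup := maximalMinors_eq_sup_of_column_eq_zero hlast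
  simp only [Fin.succAbove_last] at hsup
  exact hsup

theorem stmt_0_general {t c : ℕ} (ht : 0 < t) (hc : 0 < c) (x : Fin c → S)
    (u : Fin (t + c - 1) → Fin t → ℕ) (A : Matrix (Fin t) (Fin (t + c - 1)) S)
    (hA : ∀ i j, A i j =
      if h : i.1 ≤ j.1 ∧ j.1 < i.1 + c then x ⟨j.1 - i.1, by omega⟩ ^ u j i else 0)
    (A' : Matrix (Fin (t - 1)) (Fin (t + c - 2)) S)
    (hA' : A' = A.submatrix (Fin.castLE tsub_le_self) (Fin.castLE (by omega)))
    (B : Matrix (Fin t) (Fin (t + c - 2)) S)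
    (hB : B = A.submatrix id (Fin.castLE (by omega))) :
    maximalMinors A = maximalMinors B +
      Ideal.span {x ⟨c - 1, by omega⟩ ^ u ⟨t + c - 2, by omega⟩ ⟨t - 1, by omega⟩} *
        maximalMinors A' := by
  have hcorner : A ⟨t - 1, by omega⟩ ⟨t + c - 2, by omega⟩ =
      x ⟨c - 1, by omega⟩ ^ u ⟨t + c - 2, by omega⟩ ⟨t - 1, by omega⟩ := by
    have hindex : t + c - 2 - (t - 1) = c - 1 := by omega
    rw [hA, dif_pos (by dsimp only; omega)]
    simp only [hindex]
  have hcolumn (i : Fin t) (hi : i.1 < t - 1) : A i ⟨t + c - 2, by omega⟩ = 0 := by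
    rw [hA, dif_neg (by dsimp only; omega)]
  rw [hA', hB, ← hcorner]
  exact maximalMinors_eq_sup_of_last_column_eq_zero (by omega) (by omega) A hcolumn

end Minors

/-- Let `t ≥ 2`.  Deleting the last row and column of `A` gives `A'`, deleting the last
column gives `B`; then `I(A) = I(B) + x_c^{u_{t+c-1,t}} · I(A')`. -/
theorem stmt_0 {k : Type*} [Field k] (c t : ℕ) (hc : 1 ≤ c) (ht : 2 ≤ t)
    (u : Fin (t + c - 1) → Fin t → ℕ)
    (hupos : ∀ j i, 0 < u j i)
    (hurow : ∀ (j j' : Fin (t + c - 1)) (i : Fin t), j ≤ j' → u j i ≤ u j' i)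
    (hucol : ∀ (j : Fin (t + c - 1)) (i i' : Fin t), i ≤ i' → u j i ≤ u j i')
    (A : Matrix (Fin t) (Fin (t + c - 1)) (MvPolynomial (Fin c) k))
    (hA : ∀ i j, A i j =
      if h : i.1 ≤ j.1 ∧ j.1 < i.1 + c
      then X (⟨j.1 - i.1, by omega⟩ : Fin c) ^ u j i else 0)
    (A' : Matrix (Fin (t - 1)) (Fin (t + c - 2)) (MvPolynomial (Fin c) k))
    (hA' : A' = A.submatrix (Fin.castLE (show t - 1 ≤ t by omega))
      (Fin.castLE (show t + c - 2 ≤ t + c - 1 by omega)))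
    (B : Matrix (Fin t) (Fin (t + c - 2)) (MvPolynomial (Fin c) k))
    (hB : B = A.submatrix id (Fin.castLE (show t + c - 2 ≤ t + c - 1 by omega))) :
    maximalMinors A =
      maximalMinors B +
        Ideal.span {X (⟨c - 1, by omega⟩ : Fin c) ^
            u (⟨t + c - 2, by omega⟩ : Fin (t + c - 1)) (⟨t - 1, by omega⟩ : Fin t)} *
          maximalMinors A' := by
  exact stmt_0_general (by omega) hc X u A hA A' hA' B hB
end

section
/- Let t ≥ 2, let A' be the (t−1)×(t+c−2) matrix obtained from A by deleting its last row and last column, let B be the t×(t+c−2) matrix obtained from A by deleting its last column, and set I = I(A), I' = I(A'), J = I(B), and a = u_{t+c−1,t}. Then J ⊆ I', and the sequence of R-modules 0 → J → I' × J → I → 0 is exact, where the first map sends f to (f, −x_c^a·f) and the second map sends (g,h) to x_c^a·g + h; that is, the first map is injective, the second map is well defined (its values lie in I) and surjective onto I, and the kernel of the second map equals the image of the first. -/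
open MvPolynomial Matrix

/-!
Number the variables from `0` and let `𝔞_d` be the ideal generated by all `x_i` with `i ≥ d`. For
the top left `t × n` block of the band matrix, with `t + d = n + 1`, every linear relation modulo
`𝔞_d` among the maximal minors is a combination of Laplace expansions with a repeated row, i.e. it
comes from the first differential of the Eagon–Northcott complex. This is proved by induction on `d`
and `t`. Such relations modulo `𝔞_d` lift to relations modulo `𝔞_{d+1}`, so `x_d` is a
nonzerodivisor modulo `𝔞_{d+1}` and the minors, and by Nakayama's lemma the relations modulo
`𝔞_{d+1}` are again of this form. The property persists when one adjoins a row and a column whose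
entries vanish modulo `𝔞_{d+1}` except for a power of `x_d` in the corner.

Nakayama's lemma costs a localization at `1 + m`, where `m` is the ideal of all the variables. It is
harmless in the end, since a prime containing `J` and the last variable contains `m`: thus the last
variable is a nonzerodivisor modulo `J`. As its `a`-th power is the only nonzero entry in the last
column of `A`, the ideal `I` is the sum of that power times `I'` and `J`, and exactness follows.
-/

section Saturation

variable {R W W' : Type*} [CommRing R] [AddCommGroup W] [Module R W] [AddCommGroup W'] [Module R W']
  {m : Ideal R} {N L : Submodule R W}

/-- The saturation of a submodule `N` with respect to the multiplicative set `1 + m`: the preimage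
of the localization of `N` at `1 + m`. -/
def oneAddSaturation (m : Ideal R) (N : Submodule R W) : Submodule R W where
  carrier := {w | ∃ s, s - 1 ∈ m ∧ s • w ∈ N}
  zero_mem' := ⟨1, by simp, by simp⟩
  add_mem' := by
    rintro v w ⟨s, hs, hv⟩ ⟨s', hs', hw⟩
    refine ⟨s * s', ?_, ?_⟩
    · rw [show s * s' - 1 = s * (s' - 1) + (s - 1) by ring]
      exact m.add_mem (m.mul_mem_left _ hs') hs
    · rw [smul_add, mul_smul s s' w, mul_comm, mul_smul]
      exact N.add_mem (N.smul_mem _ hv) (N.smul_mem _ hw)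
  smul_mem' := by
    rintro a w ⟨s, hs, hw⟩
    exact ⟨s, hs, smul_comm s a w ▸ N.smul_mem a hw⟩

lemma le_oneAddSaturation (m : Ideal R) (N : Submodule R W) : N ≤ oneAddSaturation m N :=
  fun w hw ↦ ⟨1, by simp, by simpa using hw⟩

lemma oneAddSaturation_mono (h : N ≤ L) : oneAddSaturation m N ≤ oneAddSaturation m L :=
  fun _ ⟨s, hs, hw⟩ ↦ ⟨s, hs, h hw⟩

lemma mem_oneAddSaturation_of_smul_mem {s : R} {w : W} (hs : s - 1 ∈ m)
    (hw : s • w ∈ oneAddSaturation m N) : w ∈ oneAddSaturation m N := by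
  obtain ⟨s', hs', hw⟩ := hw
  refine ⟨s' * s, ?_, by rwa [mul_smul]⟩
  rw [show s' * s - 1 = s' * (s - 1) + (s' - 1) by ring]
  exact m.add_mem (m.mul_mem_left _ hs) hs'

lemma map_mem_oneAddSaturation {w : W} (hw : w ∈ oneAddSaturation m N) (f : W →ₗ[R] W')
    {N' : Submodule R W'} (hf : N ≤ N'.comap f) : f w ∈ oneAddSaturation m N' := by
  obtain ⟨s, hs, hw⟩ := hw
  exact ⟨s, hs, by simpa using hf hw⟩

/-- Nakayama's lemma over the localization at `1 + m`. -/
lemma le_oneAddSaturation_of_le_smul_sup (hN : N.FG)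
    (h : N ≤ oneAddSaturation m (m • N ⊔ L)) : N ≤ oneAddSaturation m L := by
  have hle : N ≤ L ⊔ m • N := by
    intro w hw
    obtain ⟨s, hs, hsw⟩ := h hw
    have hw' : w = s • w - (s - 1) • w := by module
    rw [hw', sup_comm]
    exact sub_mem hsw (le_sup_left (a := m • N) (Submodule.smul_mem_smul hs hw))
  obtain ⟨s, hs, hsN⟩ := Submodule.exists_sub_one_mem_and_smul_le_of_fg_of_le_sup hN le_rfl hle
  exact fun w hw ↦ ⟨s, hs, hsN (Submodule.smul_mem_pointwise_smul w s N hw)⟩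

end Saturation

section WedgePower

variable {R V : Type*} [CommRing R] [AddCommGroup V] [Module R V]

open ExteriorAlgebra
open CliffordAlgebra (contractLeft contractLeft_ι contractLeft_ι_mul)

/-- The image of `⋀ᵗ U` in the exterior algebra of `V`, for a submodule `U` of `V`. -/
def wedgePower (U : Submodule R V) (t : ℕ) : Submodule R (ExteriorAlgebra R V) :=
  U.map (ι R) ^ t

lemma wedgePower_mono {U U' : Submodule R V} (h : U ≤ U') (t : ℕ) :
    wedgePower U t ≤ wedgePower U' t :=
  pow_le_pow_left' (Submodule.map_mono h) t

lemma ι_mul_mem_wedgePower {U : Submodule R V} {t : ℕ} {v : V} {w : ExteriorAlgebra R V}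
    (hv : v ∈ U) (hw : w ∈ wedgePower U t) : ι R v * w ∈ wedgePower U (t + 1) := by
  rw [wedgePower, pow_succ']
  exact Submodule.mul_mem_mul (Submodule.mem_map_of_mem hv) hw

lemma wedgePower_span_singleton_sup (v : V) (U : Submodule R V) (t : ℕ) :
    wedgePower (Submodule.span R {v} ⊔ U) (t + 1) =
      Submodule.span R {ι R v} * wedgePower U t ⊔ wedgePower U (t + 1) := by
  set E := Submodule.span R {ι R v}
  set F := U.map (ι R)
  have hEE : E * E = ⊥ := by simp [E, Submodule.span_mul_span]
  have hFE : F * E ≤ E * F := by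
    rw [Submodule.mul_le]
    rintro _ ⟨u, hu, rfl⟩ _ hz
    obtain ⟨a, rfl⟩ := Submodule.mem_span_singleton.mp hz
    rw [mul_smul_comm, eq_neg_of_add_eq_zero_left (ι_add_mul_swap u v)]
    exact Submodule.smul_mem _ _ (neg_mem (Submodule.mul_mem_mul
      (Submodule.mem_span_singleton_self _) (Submodule.mem_map_of_mem hu)))
  have hsum : (Submodule.span R {v} ⊔ U).map (ι R) = E ⊔ F := by
    rw [Submodule.map_sup, Submodule.map_span, Set.image_singleton]
  simp only [wedgePower, hsum]
  induction t with
  | zero => simp [F]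
  | succ t ih =>
    have hFEF : F * (E * F ^ t) ≤ E * F ^ (t + 1) := by
      rw [← mul_assoc, pow_succ', ← mul_assoc]
      exact mul_le_mul_left hFE _
    rw [pow_succ', ih, Submodule.sup_mul, Submodule.mul_sup, Submodule.mul_sup, ← mul_assoc E E,
      hEE, Submodule.bot_mul, bot_sup_eq, ← pow_succ', ← sup_assoc, sup_eq_left.mpr hFEF]

lemma wedgePower_span_image_Iio_eq_bot (e : ℕ → V) {n t : ℕ} (h : n < t) :
    wedgePower (Submodule.span R (e '' Set.Iio n)) t = ⊥ := by
  induction n generalizing t with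
  | zero => simp [wedgePower, Submodule.map_bot, h.ne', -Submodule.zero_eq_bot]
  | succ n ih =>
    obtain ⟨t, rfl⟩ := Nat.exists_eq_add_one_of_ne_zero (Nat.ne_zero_of_lt h)
    rw [← Order.succ_eq_add_one, Order.Iio_succ_eq_insert, Set.image_insert_eq,
      Submodule.span_insert, wedgePower_span_singleton_sup, ih (by omega), ih (by omega),
      Submodule.mul_bot, sup_bot_eq]

lemma contractLeft_mem_wedgePower (d : Module.Dual R V) {U : Submodule R V} {t : ℕ}
    {w : ExteriorAlgebra R V} (hw : w ∈ wedgePower U (t + 1)) :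
    contractLeft d w ∈ wedgePower U t := by
  induction t generalizing w with
  | zero =>
    rw [wedgePower, zero_add, pow_one] at hw
    obtain ⟨u, -, rfl⟩ := hw
    rw [contractLeft_ι, wedgePower, pow_zero]
    exact Submodule.algebraMap_mem _
  | succ t ih =>
    rw [wedgePower, pow_succ'] at hw
    induction hw using Submodule.mul_induction_on' with
    | mem_mul_mem a ha b hb =>
      obtain ⟨u, hu, rfl⟩ := ha
      rw [contractLeft_ι_mul]
      exact sub_mem (Submodule.smul_mem _ _ hb) (ι_mul_mem_wedgePower hu (ih hb))
    | add a _ b _ ha hb => rw [map_add]; exact add_mem ha hb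

lemma contractLeft_ιMulti (d : Module.Dual R V) {n : ℕ} (v : Fin (n + 1) → V) :
    contractLeft d (ιMulti R (n + 1) v) =
      ∑ j : Fin (n + 1), ((-1) ^ (j : ℕ) * d (v j)) • ιMulti R n (v ∘ j.succAbove) := by
  induction n with
  | zero => simp [ιMulti_succ_apply, Algebra.algebraMap_eq_smul_one]
  | succ n ih =>
    rw [ιMulti_succ_apply, contractLeft_ι_mul, ih, Finset.mul_sum, sub_eq_add_neg,
      ← Finset.sum_neg_distrib, Fin.sum_univ_succ (n := n + 1)]
    congr 1
    · simp [Matrix.vecTail, Fin.succAbove_zero]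
    · refine Finset.sum_congr rfl fun j _ ↦ ?_
      rw [ιMulti_succ_apply (v := v ∘ j.succ.succAbove), mul_smul_comm, ← neg_smul]
      congr 2
      · simp [Matrix.vecTail, pow_succ]
      · congr 1
        ext i
        simp [Matrix.vecTail]

end WedgePower

section MinorForm

variable {R V : Type*} [CommRing R] [AddCommGroup V] [Module R V] (r : ℕ → Module.Dual R V)

open ExteriorAlgebra
open CliffordAlgebra (contractLeft contractLeft_ι_mul contractLeft_comm contractLeft_contractLeft)

/-- The linear form `w ↦ r₀ ⌋ (r₁ ⌋ ⋯ (rₜ₋₁ ⌋ w))` on the exterior algebra, read off in degree `0`.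
On a wedge of `t` vectors it is, up to sign, the determinant of the values of the `rᵢ` on them. -/
def minorForm : ℕ → ExteriorAlgebra R V →ₗ[R] R
  | 0 => algebraMapInv.toLinearMap
  | t + 1 => minorForm t ∘ₗ contractLeft (r t)

lemma minorForm_succ_apply (t : ℕ) (w : ExteriorAlgebra R V) :
    minorForm r (t + 1) w = minorForm r t (contractLeft (r t) w) := rfl

lemma minorForm_contractLeft {i t : ℕ} (hi : i < t) (w : ExteriorAlgebra R V) :
    minorForm r t (contractLeft (r i) w) = 0 := by
  induction t generalizing w with
  | zero => omega
  | succ t ih =>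
    rw [minorForm_succ_apply]
    rcases Nat.lt_succ_iff_lt_or_eq.mp hi with hi | rfl
    · rw [contractLeft_comm, map_neg, ih hi, neg_zero]
    · rw [contractLeft_contractLeft, map_zero]

lemma minorForm_ι_mul_mem {𝔞 : Ideal R} {t : ℕ} {v : V} (hv : ∀ i < t, r i v ∈ 𝔞)
    (w : ExteriorAlgebra R V) : minorForm r t (ι R v * w) ∈ 𝔞 := by
  induction t generalizing w with
  | zero => simp [minorForm, algebraMapInv]
  | succ t ih =>
    rw [minorForm_succ_apply, contractLeft_ι_mul, map_sub, map_smul, smul_eq_mul]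
    exact sub_mem (𝔞.mul_mem_right _ (hv t t.lt_succ_self))
      (ih (fun i hi ↦ hv i (hi.trans t.lt_succ_self)) _)

lemma minorForm_succ_ι_mul_sub_mem {𝔞 : Ideal R} {t : ℕ} {v : V} (hv : ∀ i < t, r i v ∈ 𝔞)
    (w : ExteriorAlgebra R V) :
    minorForm r (t + 1) (ι R v * w) - r t v * minorForm r t w ∈ 𝔞 := by
  rw [minorForm_succ_apply, contractLeft_ι_mul, map_sub, map_smul, smul_eq_mul, sub_sub_cancel_left]
  exact neg_mem (minorForm_ι_mul_mem r hv _)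

lemma minorForm_ιMulti (t : ℕ) :
    ∃ ε : ℤˣ, ∀ v : Fin t → V,
      minorForm r t (ιMulti R t v) = ε • (Matrix.of fun i j : Fin t ↦ r i (v j)).det := by
  induction t with
  | zero => exact ⟨1, fun v ↦ by simp [minorForm]⟩
  | succ t ih =>
    obtain ⟨ε, hε⟩ := ih
    refine ⟨(-1) ^ t * ε, fun v ↦ ?_⟩
    rw [minorForm_succ_apply, contractLeft_ιMulti, map_sum, Matrix.det_succ_row _ (Fin.last t),
      Finset.smul_sum]
    refine Finset.sum_congr rfl fun j _ ↦ ?_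
    set δ := (Matrix.of fun i k : Fin t ↦ r i (v (j.succAbove k))).det with hδ
    have hminor : ((Matrix.of fun i j : Fin (t + 1) ↦ r i (v j)).submatrix
        (Fin.last t).succAbove j.succAbove).det = δ := by
      congr 1
      ext i k
      simp
    rw [map_smul, hε (v ∘ j.succAbove), hminor]
    simp only [Function.comp_apply, ← hδ]
    have hsign : (-1 : R) ^ t * (-1) ^ t = 1 := by rw [← mul_pow]; simp
    simp only [smul_eq_mul, Matrix.of_apply, Fin.val_last, Units.smul_def,
      zsmul_eq_mul, Units.val_mul, Units.val_pow_eq_pow_val, Units.val_neg, Units.val_one, pow_add]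
    push_cast
    linear_combination (-(-1) ^ (j : ℕ) * r t (v j) * ε * δ) * hsign

/-- The ideal generated by the `t × t` minors of `r₀, …, rₜ₋₁` on vectors of `U`. -/
def minorIdeal (U : Submodule R V) (t : ℕ) : Ideal R :=
  (wedgePower U t).map (minorForm r t)

variable {r}

lemma minorForm_mem_minorIdeal {U : Submodule R V} {t : ℕ} {w : ExteriorAlgebra R V}
    (hw : w ∈ wedgePower U t) : minorForm r t w ∈ minorIdeal r U t :=
  Submodule.mem_map_of_mem hw

lemma minorIdeal_succ_le (U : Submodule R V) (t : ℕ) :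
    minorIdeal r U (t + 1) ≤ minorIdeal r U t := by
  rintro _ ⟨w, hw, rfl⟩
  exact minorForm_mem_minorIdeal (contractLeft_mem_wedgePower (r t) hw)

lemma minorIdeal_span_singleton_sup {v : V} {t : ℕ} (hv : ∀ i < t, r i v = 0)
    (U : Submodule R V) :
    minorIdeal r (Submodule.span R {v} ⊔ U) (t + 1) =
      Ideal.span {r t v} * minorIdeal r U t ⊔ minorIdeal r U (t + 1) := by
  have hmul (w : ExteriorAlgebra R V) :
      minorForm r (t + 1) (ι R v * w) = r t v * minorForm r t w := by
    simpa [sub_eq_zero] using minorForm_succ_ι_mul_sub_mem r (𝔞 := ⊥) hv w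
  rw [minorIdeal, wedgePower_span_singleton_sup, Submodule.map_sup]
  congr 1
  ext f
  simp only [Ideal.mem_span_singleton_mul, minorIdeal, Submodule.mem_map,
    Submodule.mem_span_singleton_mul]
  constructor
  · rintro ⟨_, ⟨w, hw, rfl⟩, rfl⟩
    exact ⟨_, ⟨w, hw, rfl⟩, (hmul w).symm⟩
  · rintro ⟨_, ⟨w, hw, rfl⟩, rfl⟩
    exact ⟨_, ⟨w, hw, rfl⟩, hmul w⟩

lemma minorIdeal_span_image_Iio (e : ℕ → V) (p q : ℕ) :
    minorIdeal r (Submodule.span R (e '' Set.Iio q)) p =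
      maximalMinors (Matrix.of fun (i : Fin p) (j : Fin q) ↦ r i (e j)) := by
  obtain ⟨ε, hε⟩ := minorForm_ιMulti r p
  have hdet (g : Fin p → Fin q) : minorForm r p (ιMulti R p fun j ↦ e (g j)) =
      ε • ((Matrix.of fun (i : Fin p) (j : Fin q) ↦ r i (e j)).submatrix id g).det :=
    hε _
  rw [minorIdeal, wedgePower, Submodule.map_span, Submodule.span_pow, Submodule.map_span,
    maximalMinors]
  refine le_antisymm (Submodule.span_le.mpr ?_) (Submodule.span_le.mpr ?_)
  · rintro _ ⟨_, hw, rfl⟩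
    obtain ⟨f, rfl⟩ := Set.mem_pow.mp hw
    have hf (j : Fin p) : ∃ k : Fin q, ι R (e k) = f j := by
      obtain ⟨_, ⟨k, hk, rfl⟩, hkf⟩ := (f j).2
      exact ⟨⟨k, hk⟩, hkf⟩
    choose g hg using hf
    simp_rw [← hg, ← ιMulti_apply (R := R) (fun j ↦ e (g j)), hdet]
    by_cases hinj : Function.Injective g
    · exact Submodule.smul_of_tower_mem _ ε (Ideal.subset_span ⟨⟨g, hinj⟩, rfl⟩)
    · obtain ⟨j, k, hjk, hne⟩ := Function.not_injective_iff.mp hinj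
      rw [Matrix.det_zero_of_column_eq hne fun i ↦ by simp [hjk], smul_zero]
      exact zero_mem _
  · rintro _ ⟨g, rfl⟩
    rw [← inv_smul_smul ε (det _), ← hdet]
    refine Submodule.smul_of_tower_mem _ _ (Submodule.subset_span ⟨_, Set.mem_pow.mpr ⟨fun j ↦
      ⟨ι R (e (g j)), _, ⟨g j, (g j).2, rfl⟩, rfl⟩, rfl⟩, rfl⟩)

end MinorForm

section RowSyzygies

variable {R V : Type*} [CommRing R] [AddCommGroup V] [Module R V]
  {m 𝔞 : Ideal R} {r : ℕ → Module.Dual R V} {U : Submodule R V} {t : ℕ} {x : R}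

open ExteriorAlgebra
open CliffordAlgebra (contractLeft contractLeft_ι_mul)
open scoped Pointwise

/-- The evident relations modulo `𝔞` among the `t × t` minors of `r₀, …, rₜ₋₁` on `U`: the Laplace
expansions of `(t + 1) × (t + 1)` minors with a repeated row, which are the image of the first
differential of the Eagon–Northcott complex, together with all multiples of `𝔞`. -/
def rowSyzygies (𝔞 : Ideal R) (r : ℕ → Module.Dual R V) (U : Submodule R V) (t : ℕ) :
    Submodule R (ExteriorAlgebra R V) :=
  (⨆ i : Fin t, (wedgePower U (t + 1)).map (contractLeft (r i))) ⊔ 𝔞 • wedgePower U t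

/-- Every relation modulo `𝔞` among the `t × t` minors of `r₀, …, rₜ₋₁` on `U` is a consequence of
the evident ones, after localization at `1 + m`. -/
def GeneratedByRowSyzygies (m 𝔞 : Ideal R) (r : ℕ → Module.Dual R V) (U : Submodule R V)
    (t : ℕ) : Prop :=
  ∀ w ∈ wedgePower U t, minorForm r t w ∈ 𝔞 → w ∈ oneAddSaturation m (rowSyzygies 𝔞 r U t)

lemma contractLeft_mem_rowSyzygies {i : ℕ} (hi : i < t) {w : ExteriorAlgebra R V}
    (hw : w ∈ wedgePower U (t + 1)) : contractLeft (r i) w ∈ rowSyzygies 𝔞 r U t :=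
  le_sup_left (a := ⨆ i : Fin t, (wedgePower U (t + 1)).map (contractLeft (r i)))
    (Submodule.mem_iSup_of_mem ⟨i, hi⟩ (Submodule.mem_map_of_mem hw))

lemma smul_mem_rowSyzygies {a : R} (ha : a ∈ 𝔞) {w : ExteriorAlgebra R V}
    (hw : w ∈ wedgePower U t) : a • w ∈ rowSyzygies 𝔞 r U t :=
  le_sup_right (a := ⨆ i : Fin t, (wedgePower U (t + 1)).map (contractLeft (r i)))
    (Submodule.smul_mem_smul ha hw)

lemma rowSyzygies_le {P : Submodule R (ExteriorAlgebra R V)}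
    (hrow : ∀ i < t, ∀ w ∈ wedgePower U (t + 1), contractLeft (r i) w ∈ P)
    (hsmul : ∀ a ∈ 𝔞, ∀ w ∈ wedgePower U t, a • w ∈ P) : rowSyzygies 𝔞 r U t ≤ P :=
  sup_le (iSup_le fun i ↦ Submodule.map_le_iff_le_comap.mpr (hrow i i.2))
    (Submodule.smul_le.mpr hsmul)

lemma rowSyzygies_mono {U' : Submodule R V} (h : U ≤ U') :
    rowSyzygies 𝔞 r U t ≤ rowSyzygies 𝔞 r U' t :=
  rowSyzygies_le (fun _ hi _ hw ↦ contractLeft_mem_rowSyzygies hi (wedgePower_mono h _ hw))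
    fun _ ha _ hw ↦ smul_mem_rowSyzygies ha (wedgePower_mono h _ hw)

lemma rowSyzygies_le_comap_minorForm : rowSyzygies 𝔞 r U t ≤ Submodule.comap (minorForm r t) 𝔞 :=
  rowSyzygies_le (fun _ hi w _ ↦ by simp [minorForm_contractLeft r hi w])
    fun a ha w _ ↦ by simpa using 𝔞.mul_mem_right _ ha

lemma rowSyzygies_sup_span_singleton :
    rowSyzygies (𝔞 ⊔ Ideal.span {x}) r U t = rowSyzygies 𝔞 r U t ⊔ x • wedgePower U t := by
  rw [rowSyzygies, rowSyzygies, Submodule.sup_smul, Submodule.ideal_span_singleton_smul, sup_assoc]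

lemma generatedByRowSyzygies_zero : GeneratedByRowSyzygies m 𝔞 r U 0 := by
  intro w hw hw𝔞
  rw [wedgePower, pow_zero] at hw
  obtain ⟨a, rfl⟩ := Submodule.mem_one.mp hw
  have ha : a ∈ 𝔞 := by simpa [minorForm] using hw𝔞
  rw [Algebra.algebraMap_eq_smul_one]
  exact le_oneAddSaturation _ _ (smul_mem_rowSyzygies ha (by simp [wedgePower]))

/-- A relation modulo `x` lifts to a relation modulo `𝔞`, because the evident ones do. -/
lemma GeneratedByRowSyzygies.isSMulRegular
    (h : GeneratedByRowSyzygies m (𝔞 ⊔ Ideal.span {x}) r U t) (hx : IsSMulRegular (R ⧸ 𝔞) x) :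
    IsSMulRegular (R ⧸ oneAddSaturation m (minorIdeal r U t ⊔ 𝔞)) x := by
  rw [isSMulRegular_quotient_iff_mem_of_smul_mem]
  rintro f ⟨s, hs, hsf⟩
  obtain ⟨_, ⟨w, hw, rfl⟩, a, ha, hwa⟩ := Submodule.mem_sup.mp hsf
  have hw𝔞 : minorForm r t w ∈ 𝔞 ⊔ Ideal.span {x} := by
    rw [eq_sub_of_add_eq hwa, smul_eq_mul, smul_eq_mul, mul_left_comm]
    exact sub_mem (Submodule.mem_sup_right
      (Ideal.mul_mem_right _ _ (Ideal.mem_span_singleton_self x))) (Submodule.mem_sup_left ha)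
  obtain ⟨s', hs', hw'⟩ := h w hw hw𝔞
  rw [rowSyzygies_sup_span_singleton] at hw'
  obtain ⟨ρ, hρ, _, ⟨w', hw', rfl⟩, hsum⟩ := Submodule.mem_sup.mp hw'
  have hform : minorForm r t ρ + x * minorForm r t w' = s' * minorForm r t w := by
    simpa using congrArg (minorForm r t) hsum
  have hmem : s' * (s * f) - minorForm r t w' ∈ 𝔞 := by
    refine mem_of_isSMulRegular_quotient_of_smul_mem hx ?_
    have hdiff : x • (s' * (s * f) - minorForm r t w') = minorForm r t ρ + s' * a := by
      simp only [smul_eq_mul] at hwa ⊢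
      linear_combination -s' * hwa - hform
    rw [hdiff]
    exact add_mem (rowSyzygies_le_comap_minorForm hρ) (𝔞.mul_mem_left _ ha)
  refine mem_oneAddSaturation_of_smul_mem hs (mem_oneAddSaturation_of_smul_mem hs'
    (le_oneAddSaturation _ _ ?_))
  rw [smul_eq_mul, smul_eq_mul, ← sub_add_cancel (s' * (s * f)) (minorForm r t w')]
  exact add_mem (le_sup_right (a := minorIdeal r U t) hmem)
    (le_sup_left (a := minorIdeal r U t) (minorForm_mem_minorIdeal hw'))

lemma GeneratedByRowSyzygies.of_sup_span_singleton [IsNoetherianRing R] (hU : U.FG)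
    (h : GeneratedByRowSyzygies m (𝔞 ⊔ Ideal.span {x}) r U t) (hx : IsSMulRegular (R ⧸ 𝔞) x)
    (hxm : x ∈ m) : GeneratedByRowSyzygies m 𝔞 r U t := by
  set N := wedgePower U t ⊓ Submodule.comap (minorForm r t) 𝔞
  have hN : N.FG := Submodule.FG.of_le ((hU.map _).pow t) inf_le_left
  suffices hNle : N ≤ oneAddSaturation m (m • N ⊔ rowSyzygies 𝔞 r U t) from
    fun w hw hw𝔞 ↦ le_oneAddSaturation_of_le_smul_sup hN hNle ⟨hw, hw𝔞⟩
  rintro w ⟨hw, hw𝔞⟩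
  obtain ⟨s, hs, hsw⟩ := h w hw (le_sup_left (a := 𝔞) hw𝔞)
  rw [rowSyzygies_sup_span_singleton] at hsw
  obtain ⟨ρ, hρ, _, ⟨w', hw', rfl⟩, hsum⟩ := Submodule.mem_sup.mp hsw
  have hw'𝔞 : minorForm r t w' ∈ 𝔞 := by
    refine mem_of_isSMulRegular_quotient_of_smul_mem hx ?_
    have hform : minorForm r t ρ + x • minorForm r t w' = s • minorForm r t w := by
      simpa using congrArg (minorForm r t) hsum
    rw [eq_sub_of_add_eq' hform]
    exact sub_mem (Submodule.smul_mem _ s hw𝔞) (rowSyzygies_le_comap_minorForm hρ)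
  refine ⟨s, hs, hsum ▸ add_mem (le_sup_right (a := m • N) hρ) ?_⟩
  exact le_sup_left (a := m • N) (Submodule.smul_mem_smul hxm ⟨hw', hw'𝔞⟩)

variable {v : V}

lemma rowSyzygies_le_comap_ι_mul (hv : ∀ i < t, r i v ∈ 𝔞) :
    rowSyzygies 𝔞 r U t ≤ (rowSyzygies 𝔞 r (Submodule.span R {v} ⊔ U) (t + 1)).comap
      (LinearMap.mulLeft R (ι R v)) := by
  have hmul {k : ℕ} {w : ExteriorAlgebra R V} (hw : w ∈ wedgePower U k) :
      ι R v * w ∈ wedgePower (Submodule.span R {v} ⊔ U) (k + 1) :=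
    ι_mul_mem_wedgePower (Submodule.mem_sup_left (Submodule.mem_span_singleton_self v))
      (wedgePower_mono le_sup_right k hw)
  refine rowSyzygies_le (fun i hi w hw ↦ ?_) fun a ha w hw ↦ ?_
  · have hexpand : ι R v * contractLeft (r i) w = r i v • w - contractLeft (r i) (ι R v * w) := by
      rw [contractLeft_ι_mul, sub_sub_cancel]
    rw [Submodule.mem_comap, LinearMap.mulLeft_apply, hexpand]
    exact sub_mem (smul_mem_rowSyzygies (hv i hi) (wedgePower_mono le_sup_right _ hw))
      (contractLeft_mem_rowSyzygies (hi.trans t.lt_succ_self) (hmul hw))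
  · rw [Submodule.mem_comap, LinearMap.mulLeft_apply, mul_smul_comm]
    exact smul_mem_rowSyzygies ha (hmul hw)

/-- A relation whose `v`-part can be corrected, modulo `𝔞`, by a row expansion is evident: what is
left of it splits into a relation among the columns of `U` in one row less, multiplied by `v`, and
one among the columns of `U`. -/
lemma ι_mul_add_mem_oneAddSaturation_rowSyzygies (hv : ∀ i < t, r i v ∈ 𝔞)
    (hdel : GeneratedByRowSyzygies m 𝔞 r U t) (hcol : GeneratedByRowSyzygies m 𝔞 r U (t + 1))
    {w₁ w₂ z : ExteriorAlgebra R V} (hw₁ : w₁ ∈ wedgePower U t) (hw₂ : w₂ ∈ wedgePower U (t + 1))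
    (hz : z ∈ wedgePower U (t + 1)) (hw : minorForm r (t + 1) (ι R v * w₁ + w₂) ∈ 𝔞)
    (hw₁z : minorForm r t w₁ - minorForm r (t + 1) z ∈ 𝔞) :
    ι R v * w₁ + w₂ ∈
      oneAddSaturation m (rowSyzygies 𝔞 r (Submodule.span R {v} ⊔ U) (t + 1)) := by
  set P := oneAddSaturation m (rowSyzygies 𝔞 r (Submodule.span R {v} ⊔ U) (t + 1))
  have hvpart : ι R v * (w₁ - contractLeft (r t) z) ∈ P := by
    refine map_mem_oneAddSaturation (hdel _ ?_ ?_) (LinearMap.mulLeft R (ι R v))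
      (rowSyzygies_le_comap_ι_mul hv)
    · exact sub_mem hw₁ (contractLeft_mem_wedgePower _ hz)
    · rwa [map_sub, ← minorForm_succ_apply]
  have hrest : w₂ + r t v • z ∈ P := by
    refine oneAddSaturation_mono (rowSyzygies_mono le_sup_right) (hcol _ ?_ ?_)
    · exact add_mem hw₂ (Submodule.smul_mem _ _ hz)
    · have hsplit : minorForm r (t + 1) (w₂ + r t v • z) =
          minorForm r (t + 1) (ι R v * w₁ + w₂) -
            (minorForm r (t + 1) (ι R v * w₁) - r t v * minorForm r t w₁) -
            r t v * (minorForm r t w₁ - minorForm r (t + 1) z) := by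
        simp only [map_add, map_smul, smul_eq_mul]
        ring
      rw [hsplit]
      exact sub_mem (sub_mem hw (minorForm_succ_ι_mul_sub_mem r hv w₁)) (𝔞.mul_mem_left _ hw₁z)
  have hrow : contractLeft (r t) (ι R v * z) ∈ P :=
    le_oneAddSaturation _ _ (contractLeft_mem_rowSyzygies t.lt_succ_self
      (ι_mul_mem_wedgePower (Submodule.mem_sup_left (Submodule.mem_span_singleton_self v))
        (wedgePower_mono le_sup_right _ hz)))
  have hdecomp : ι R v * w₁ + w₂ = ι R v * (w₁ - contractLeft (r t) z) +
      (w₂ + r t v • z) - contractLeft (r t) (ι R v * z) := by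
    rw [contractLeft_ι_mul, mul_sub]
    abel
  exact hdecomp ▸ sub_mem (add_mem hvpart hrest) hrow

lemma GeneratedByRowSyzygies.span_singleton_sup (hv : ∀ i < t, r i v ∈ 𝔞)
    (hdel : GeneratedByRowSyzygies m 𝔞 r U t) (hcol : GeneratedByRowSyzygies m 𝔞 r U (t + 1))
    (hreg : IsSMulRegular (R ⧸ oneAddSaturation m (minorIdeal r U (t + 1) ⊔ 𝔞)) (r t v)) :
    GeneratedByRowSyzygies m 𝔞 r (Submodule.span R {v} ⊔ U) (t + 1) := by
  intro w hw hw𝔞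
  rw [wedgePower_span_singleton_sup] at hw
  obtain ⟨_, hvw₁, w₂, hw₂, rfl⟩ := Submodule.mem_sup.mp hw
  obtain ⟨w₁, hw₁, rfl⟩ := Submodule.mem_span_singleton_mul.mp hvw₁
  have hlead : r t v * minorForm r t w₁ + minorForm r (t + 1) w₂ ∈ 𝔞 := by
    convert sub_mem hw𝔞 (minorForm_succ_ι_mul_sub_mem r hv w₁) using 1
    rw [map_add]
    ring
  obtain ⟨s, hs, hsw₁⟩ : minorForm r t w₁ ∈ oneAddSaturation m (minorIdeal r U (t + 1) ⊔ 𝔞) := by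
    refine mem_of_isSMulRegular_quotient_of_smul_mem hreg (le_oneAddSaturation _ _ ?_)
    rw [smul_eq_mul, ← add_sub_cancel_right (r t v * _) (minorForm r (t + 1) w₂)]
    exact sub_mem (Submodule.mem_sup_right hlead)
      (Submodule.mem_sup_left (minorForm_mem_minorIdeal hw₂))
  obtain ⟨_, ⟨z, hz, rfl⟩, a, ha, hza⟩ := Submodule.mem_sup.mp hsw₁
  have hsmul : s • (ι R v * w₁ + w₂) = ι R v * (s • w₁) + s • w₂ := by
    rw [smul_add, mul_smul_comm]
  refine mem_oneAddSaturation_of_smul_mem hs ?_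
  rw [hsmul]
  refine ι_mul_add_mem_oneAddSaturation_rowSyzygies hv hdel hcol (Submodule.smul_mem _ s hw₁)
    (Submodule.smul_mem _ s hw₂) hz ?_ ?_
  · rw [← hsmul, map_smul]
    exact 𝔞.mul_mem_left s hw𝔞
  · rwa [map_smul, ← hza, add_sub_cancel_left]

end RowSyzygies

section PowerBand

variable {R V : Type*} [CommRing R] [AddCommGroup V] [Module R V]
  {r : ℕ → Module.Dual R V} {e : ℕ → V} {x : ℕ → R} {c t : ℕ}

/-- The infinite matrix `M` is upper triangular, and the entries of its `d`-th superdiagonal are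
positive powers of `x d`. -/
structure IsPowerBand (M : ℕ → ℕ → R) (x : ℕ → R) : Prop where
  exists_eq_pow : ∀ i d, ∃ k ≠ 0, M i (i + d) = x d ^ k
  eq_zero_of_lt : ∀ i j, j < i → M i j = 0

lemma generatedByRowSyzygies_span_image_Iio [IsNoetherianRing R] {m : Ideal R}
    (hM : IsPowerBand (fun i j ↦ r i (e j)) x) (hxm : ∀ d, x d ∈ m)
    (hreg : ∀ d < c, IsSMulRegular (R ⧸ Ideal.span (x '' Set.Ioi d)) (x d))
    {d n : ℕ} (hd : d ≤ c) (hn : t + d = n + 1) :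
    GeneratedByRowSyzygies m (Ideal.span (x '' Set.Ici d)) r
      (Submodule.span R (e '' Set.Iio n)) t := by
  induction d generalizing t n with
  | zero =>
    intro w hw _
    rw [wedgePower_span_image_Iio_eq_bot e (by omega)] at hw
    exact (Submodule.mem_bot R).mp hw ▸ zero_mem _
  | succ d ihd =>
    obtain rfl : n = t + d := by omega
    rw [← Order.succ_eq_add_one d, Order.Ici_succ]
    have hIci : Ideal.span (x '' Set.Ici d) =
        Ideal.span (x '' Set.Ioi d) ⊔ Ideal.span {x d} := by
      rw [← Set.Ioi_insert, Set.image_insert_eq, Ideal.span_insert, sup_comm]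
    induction t with
    | zero => exact generatedByRowSyzygies_zero
    | succ t iht =>
      rw [show t + 1 + d = Order.succ (t + d) by
        rw [Order.succ_eq_add_one]; omega, Order.Iio_succ_eq_insert,
        Set.image_insert_eq, Submodule.span_insert]
      have hmod := hIci ▸ ihd (t := t + 1) (n := t + d) (by omega) (by omega)
      obtain ⟨k, -, hk⟩ := hM.exists_eq_pow t d
      refine .span_singleton_sup (fun i hi ↦ ?_) (iht (by omega)) (.of_sup_span_singleton ?_ hmod
        (hreg d hd) (hxm d)) (hk ▸ (hmod.isSMulRegular (hreg d hd)).pow k)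
      · obtain ⟨l, hl, hil⟩ := hM.exists_eq_pow i (t - i + d)
        rw [show i + (t - i + d) = t + d by omega] at hil
        rw [hil]
        have hd' : d < t - i + d := by omega
        exact Ideal.pow_mem_of_mem _ (Ideal.subset_span (Set.mem_image_of_mem x hd')) l
          (Nat.pos_of_ne_zero hl)
      · exact Submodule.fg_span ((Set.finite_Iio _).image e)

/-- The ideal of maximal minors of the top left `p × q` block of an infinite matrix. -/
noncomputable def blockMinors (M : ℕ → ℕ → R) (p q : ℕ) : Ideal R :=
  maximalMinors (Matrix.of fun (i : Fin p) (j : Fin q) ↦ M i j)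

lemma maximalMinors_eq_blockMinors {p q : ℕ} {M : ℕ → ℕ → R} {A : Matrix (Fin p) (Fin q) R}
    (hA : ∀ i j, A i j = M i j) : maximalMinors A = blockMinors M p q :=
  congrArg maximalMinors (Matrix.ext hA)

lemma blockMinors_eq_minorIdeal (M : ℕ → ℕ → R) (p q : ℕ) :
    blockMinors M p q = minorIdeal (fun i ↦ Finsupp.linearCombination R (M i))
      (Submodule.span R ((fun j ↦ Finsupp.single j 1) '' Set.Iio q)) p := by
  simp [minorIdeal_span_image_Iio, blockMinors]

lemma blockMinors_succ_le (M : ℕ → ℕ → R) (p q : ℕ) :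
    blockMinors M (p + 1) q ≤ blockMinors M p q := by
  simpa only [blockMinors_eq_minorIdeal] using minorIdeal_succ_le _ p

lemma blockMinors_succ_succ_of_eq_zero {M : ℕ → ℕ → R} {p q : ℕ} (hM : ∀ i < p, M i q = 0) :
    blockMinors M (p + 1) (q + 1) =
      Ideal.span {M p q} * blockMinors M p q ⊔ blockMinors M (p + 1) q := by
  simp only [blockMinors_eq_minorIdeal]
  rw [← Order.succ_eq_add_one q, Order.Iio_succ_eq_insert, Set.image_insert_eq,
    Submodule.span_insert, minorIdeal_span_singleton_sup (by simpa using hM)]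
  simp

namespace IsPowerBand

variable {M : ℕ → ℕ → R}

lemma mem_of_blockMinors_le (hM : IsPowerBand M x) {p : Ideal R} [p.IsPrime]
    (hp : blockMinors M (t + 1) (t + c) ≤ p) {d : ℕ} (hd : d < c) : x d ∈ p := by
  induction d using Nat.strong_induction_on with
  | _ d ih =>
    set D : Matrix (Fin (t + 1)) (Fin (t + 1)) R := Matrix.of fun i j ↦ M i (d + j)
    have hD : D.det ∈ p := hp (Ideal.subset_span
      ⟨⟨fun j ↦ ⟨d + j, by omega⟩, fun j j' h ↦ by simpa [Fin.ext_iff] using h⟩, rfl⟩)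
    have hlower (i j : Fin (t + 1)) (hji : j < i) : D i j ∈ p := by
      rcases lt_or_ge (d + (j : ℕ)) i with h | h
      · simp [D, hM.eq_zero_of_lt _ _ h]
      · obtain ⟨k, hk, hik⟩ := hM.exists_eq_pow i (d + j - i)
        rw [Nat.add_sub_cancel' h] at hik
        simp only [D, Matrix.of_apply, hik]
        exact Ideal.pow_mem_of_mem _ (ih _ (by omega) (by omega)) k (Nat.pos_of_ne_zero hk)
    have htriangular : ((Ideal.Quotient.mk p).mapMatrix D).IsUpperTriangular :=
      fun i j hji ↦ Ideal.Quotient.eq_zero_iff_mem.mpr (hlower i j hji)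
    rw [← Ideal.Quotient.eq_zero_iff_mem, RingHom.map_det,
      Matrix.det_of_isUpperTriangular htriangular, Finset.prod_eq_zero_iff] at hD
    obtain ⟨i, -, hi⟩ := hD
    obtain ⟨k, -, hik⟩ := hM.exists_eq_pow i d
    have hxk : x d ^ k ∈ p := by
      simpa [D, add_comm d, hik, Ideal.Quotient.eq_zero_iff_mem, ← map_pow] using hi
    exact Ideal.IsPrime.mem_of_pow_mem ‹_› k hxk

lemma apply_add_eq_zero (hM : IsPowerBand M x) {d : ℕ} (hd : x d = 0) (i : ℕ) :
    M i (i + d) = 0 := by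
  obtain ⟨k, hk, hik⟩ := hM.exists_eq_pow i d
  rw [hik, hd, zero_pow hk]

lemma blockMinors_succ_succ (hM : IsPowerBand M x) (hx : ∀ d, c < d → x d = 0) :
    blockMinors M (t + 1) (t + c + 1) =
      Ideal.span {M t (t + c)} * blockMinors M t (t + c) ⊔ blockMinors M (t + 1) (t + c) := by
  refine blockMinors_succ_succ_of_eq_zero fun i hi ↦ ?_
  have hd : i + (t + c - i) = t + c := by omega
  exact hd ▸ hM.apply_add_eq_zero (hx _ (by omega)) i

lemma isSMulRegular_quotient_oneAddSaturation_blockMinors [IsNoetherianRing R]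
    (hM : IsPowerBand M x) (hx : ∀ d, c < d → x d = 0)
    (hreg : ∀ d ≤ c, IsSMulRegular (R ⧸ Ideal.span (x '' Set.Ioi d)) (x d))
    {m : Ideal R} (hxm : ∀ d, x d ∈ m) :
    IsSMulRegular (R ⧸ oneAddSaturation m (blockMinors M (t + 1) (t + c))) (x c) := by
  have hIoi : Ideal.span (x '' Set.Ioi c) = ⊥ := by
    simpa [Ideal.span_eq_bot] using hx
  have hgen := generatedByRowSyzygies_span_image_Iio (t := t + 1) (c := c + 1)
    (r := fun i ↦ Finsupp.linearCombination R (M i)) (e := fun j ↦ Finsupp.single j 1)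
    (by simpa using hM) hxm (fun d hd ↦ hreg d (Nat.le_of_lt_succ hd)) c.le_succ
    (show t + 1 + c = t + c + 1 by omega)
  rw [← Set.Ioi_insert, Set.image_insert_eq, Ideal.span_insert, sup_comm] at hgen
  have hsat := hgen.isSMulRegular (hreg c le_rfl)
  rwa [hIoi, sup_bot_eq, ← blockMinors_eq_minorIdeal] at hsat

lemma isSMulRegular_quotient_blockMinors [IsNoetherianRing R] (hM : IsPowerBand M x)
    (hx : ∀ d, c < d → x d = 0)
    (hreg : ∀ d ≤ c, IsSMulRegular (R ⧸ Ideal.span (x '' Set.Ioi d)) (x d)) :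
    IsSMulRegular (R ⧸ blockMinors M (t + 1) (t + c)) (x c) := by
  set J := blockMinors M (t + 1) (t + c)
  set m := Ideal.span (Set.range x)
  have hxm (d : ℕ) : x d ∈ m := Ideal.subset_span ⟨d, rfl⟩
  rw [isSMulRegular_quotient_iff_mem_of_smul_mem]
  intro f hf
  obtain ⟨s, hs, hsf⟩ := mem_of_isSMulRegular_quotient_of_smul_mem
    (hM.isSMulRegular_quotient_oneAddSaturation_blockMinors hx hreg hxm)
    (le_oneAddSaturation m J hf)
  -- A maximal ideal that contains `J` and `x c` contains all of `m`, hence not `s`.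
  by_contra hfJ
  obtain ⟨p, hp, hle⟩ := Ideal.exists_le_maximal (J.colon {f})
    (by simpa [Ideal.ne_top_iff_one, Submodule.mem_colon_singleton] using hfJ)
  have hmem {b : R} (hb : b • f ∈ J) : b ∈ p := hle (Submodule.mem_colon_singleton.mpr hb)
  have hmp : m ≤ p := by
    rw [Ideal.span_le]
    rintro _ ⟨d, rfl⟩
    rcases lt_trichotomy d c with hd | rfl | hd
    · exact hM.mem_of_blockMinors_le (fun b hb ↦ hmem (J.mul_mem_right f hb)) hd
    · exact hmem hf
    · simp [hx d hd]
  refine hp.ne_top ((Ideal.eq_top_iff_one p).mpr ?_)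
  simpa using sub_mem (hmem hsf) (hmp hs)

lemma isSMulRegular_corner_quotient_blockMinors [IsNoetherianRing R] (hM : IsPowerBand M x)
    (hx : ∀ d, c < d → x d = 0)
    (hreg : ∀ d ≤ c, IsSMulRegular (R ⧸ Ideal.span (x '' Set.Ioi d)) (x d)) :
    IsSMulRegular (R ⧸ blockMinors M (t + 1) (t + c)) (M t (t + c)) := by
  obtain ⟨k, -, hk⟩ := hM.exists_eq_pow t c
  exact hk ▸ (hM.isSMulRegular_quotient_blockMinors hx hreg).pow k

end IsPowerBand

end PowerBand

section ExactSequence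

variable {R : Type*} [CommRing R]

lemma mem_span_singleton_mul_sup_iff {a p : R} {I J : Ideal R} :
    p ∈ Ideal.span {a} * I ⊔ J ↔ ∃ g ∈ I, ∃ h ∈ J, p = a * g + h := by
  simp [Submodule.mem_sup, Ideal.mem_span_singleton_mul, eq_comm]

lemma add_eq_zero_iff_of_isSMulRegular_quotient {a g h : R} {J : Ideal R}
    (ha : IsSMulRegular (R ⧸ J) a) (hh : h ∈ J) :
    a * g + h = 0 ↔ ∃ f ∈ J, g = f ∧ h = -(a * f) := by
  refine ⟨fun hgh ↦ ⟨g, mem_of_isSMulRegular_quotient_of_smul_mem ha ?_, rfl,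
    eq_neg_of_add_eq_zero_right hgh⟩, ?_⟩
  · rw [smul_eq_mul, eq_neg_of_add_eq_zero_left hgh]
    exact neg_mem hh
  · rintro ⟨f, -, rfl, rfl⟩
    exact add_neg_cancel _

lemma isSMulRegular_X_quotient_span_X_image {σ : Type*} {s : Set σ} {i : σ} (hi : i ∉ s) :
    IsSMulRegular (MvPolynomial σ R ⧸ Ideal.span (X '' s : Set (MvPolynomial σ R)))
      (X i : MvPolynomial σ R) := by
  rw [isSMulRegular_quotient_iff_mem_of_smul_mem]
  intro f hf
  rw [smul_eq_mul, mem_ideal_span_X_image] at hf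
  rw [mem_ideal_span_X_image]
  intro a ha
  obtain ⟨j, hj, hja⟩ := hf (Finsupp.single i 1 + a) (by
    rwa [mem_support_iff, coeff_X_mul, ← mem_support_iff])
  have hij : i ≠ j := fun h ↦ hi (h ▸ hj)
  exact ⟨j, hj, by simpa [hij] using hja⟩

lemma span_extend_image_Ioi {c : ℕ} (x : Fin c → R) (d : Fin c) :
    Ideal.span (Function.extend Fin.val x 0 '' Set.Ioi (d : ℕ)) = Ideal.span (x '' Set.Ioi d) := by
  refine le_antisymm (Ideal.span_le.mpr ?_) (Ideal.span_mono ?_)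
  · rintro _ ⟨i, hi, rfl⟩
    by_cases hic : ∃ j : Fin c, (j : ℕ) = i
    · obtain ⟨j, rfl⟩ := hic
      rw [Fin.val_injective.extend_apply]
      exact Ideal.subset_span ⟨j, hi, rfl⟩
    · rw [Function.extend_apply' _ _ _ hic]
      exact zero_mem _
  · rintro _ ⟨j, hj, rfl⟩
    exact ⟨j, hj, Fin.val_injective.extend_apply x 0 j⟩

lemma isSMulRegular_extend {c : ℕ} {x : Fin c → R}
    (hreg : ∀ d, IsSMulRegular (R ⧸ Ideal.span (x '' Set.Ioi d)) (x d)) {d : ℕ} (hd : d < c) :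
    IsSMulRegular (R ⧸ Ideal.span (Function.extend Fin.val x 0 '' Set.Ioi d))
      (Function.extend Fin.val x 0 d) := by
  lift d to Fin c using hd
  rw [span_extend_image_Ioi, Fin.val_injective.extend_apply]
  exact hreg d

lemma extend_eq_zero_of_le {c : ℕ} (x : Fin c → R) {d : ℕ} (hd : c ≤ d) :
    Function.extend Fin.val x 0 d = 0 := by
  refine Function.extend_apply' _ _ _ ?_
  rintro ⟨d, rfl⟩
  exact hd.not_gt d.2

lemma exists_isPowerBand_extending {c p q : ℕ} (x : Fin c → R) (u : Fin q → Fin p → ℕ)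
    (hu : ∀ j i, 0 < u j i) (A : Matrix (Fin p) (Fin q) R)
    (hA : ∀ i j, A i j =
      if h : i.1 ≤ j.1 ∧ j.1 < i.1 + c then x ⟨j.1 - i.1, by omega⟩ ^ u j i else 0) :
    ∃ M : ℕ → ℕ → R, IsPowerBand M (Function.extend Fin.val x 0) ∧
      ∀ (i : Fin p) (j : Fin q), M i j = A i j := by
  set y : ℕ → R := Function.extend Fin.val x 0
  have hy (d : Fin c) : y d = x d := Fin.val_injective.extend_apply x 0 d
  have hy0 (d : ℕ) (hd : c ≤ d) : y d = 0 := extend_eq_zero_of_le x hd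
  refine ⟨fun i j ↦ if h : i < p ∧ j < q then A ⟨i, h.1⟩ ⟨j, h.2⟩ else
    if i ≤ j then y (j - i) else 0, ⟨fun i d ↦ ?_, fun i j hji ↦ ?_⟩, fun i j ↦ by simp⟩
  · by_cases h : i < p ∧ i + d < q
    · rcases lt_or_ge d c with hd | hd
      · exact ⟨u ⟨i + d, h.2⟩ ⟨i, h.1⟩, (hu _ _).ne', by simp [h, hA, hd, ← hy]⟩
      · exact ⟨1, one_ne_zero, by simp [h, hA, hd.not_gt, hy0 d hd]⟩
    · exact ⟨1, one_ne_zero, by simp [h]⟩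
  · by_cases h : i < p ∧ j < q
    · simp [h, hA, hji.not_ge]
    · simp [h, hji.not_ge]

/-- The sizes are tied by equations, so that no truncated subtraction occurs. -/
theorem stmt_3_general {R : Type*} [CommRing R] [IsNoetherianRing R] {b c p q t n : ℕ}
    (hc : c = b + 1) (ht : t = p + 1) (hq : q = p + b) (hn : n = q + 1) (x : Fin c → R)
    (hreg : ∀ d, IsSMulRegular (R ⧸ Ideal.span (x '' Set.Ioi d)) (x d))
    (u : Fin n → Fin t → ℕ) (hupos : ∀ j i, 0 < u j i)
    (A : Matrix (Fin t) (Fin n) R)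
    (hA : ∀ i j, A i j =
      if h : i.1 ≤ j.1 ∧ j.1 < i.1 + c then x ⟨j.1 - i.1, by omega⟩ ^ u j i else 0)
    (A' : Matrix (Fin p) (Fin q) R)
    (hA' : A' = A.submatrix (Fin.castLE (by omega)) (Fin.castLE (by omega)))
    (B : Matrix (Fin t) (Fin q) R) (hB : B = A.submatrix id (Fin.castLE (by omega)))
    (I I' J : Ideal R)
    (hI : I = maximalMinors A) (hI' : I' = maximalMinors A') (hJ : J = maximalMinors B)
    (xa : R) (hxa : xa = x ⟨b, by omega⟩ ^ u ⟨q, by omega⟩ ⟨p, by omega⟩) :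
    J ≤ I' ∧
    (∀ f ∈ J, ∀ f' ∈ J, ((f, -(xa * f)) : R × R) = (f', -(xa * f')) → f = f') ∧
    (∀ g ∈ I', ∀ h ∈ J, xa * g + h ∈ I) ∧
    (∀ f ∈ I, ∃ g ∈ I', ∃ h ∈ J, f = xa * g + h) ∧
    (∀ g ∈ I', ∀ h ∈ J, (xa * g + h = 0 ↔ ∃ f ∈ J, g = f ∧ h = -(xa * f))) := by
  subst hc ht hq hn
  obtain ⟨M, hM, hMA⟩ := exists_isPowerBand_extending x u hupos A hA
  have hIM : I = blockMinors M (p + 1) (p + b + 1) :=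
    hI ▸ maximalMinors_eq_blockMinors fun i j ↦ (hMA i j).symm
  have hIM' : I' = blockMinors M p (p + b) :=
    hI' ▸ maximalMinors_eq_blockMinors fun i j ↦ by simp [hA', ← hMA]
  have hJM : J = blockMinors M (p + 1) (p + b) :=
    hJ ▸ maximalMinors_eq_blockMinors fun i j ↦ by simp [hB, ← hMA]
  have hxaM : xa = M p (p + b) := by
    have hcorner : M p (p + b) = A ⟨p, p.lt_succ_self⟩ ⟨p + b, (p + b).lt_succ_self⟩ :=
      hMA ⟨p, _⟩ ⟨p + b, _⟩
    simp [hcorner, hxa, hA]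
  have hx (d : ℕ) (hd : b < d) : Function.extend Fin.val x 0 d = 0 := extend_eq_zero_of_le x hd
  have hsum : I = Ideal.span {xa} * I' ⊔ J := by
    rw [hIM, hIM', hJM, hxaM, hM.blockMinors_succ_succ hx]
  have hJreg : IsSMulRegular (R ⧸ J) xa := by
    rw [hJM, hxaM]
    exact hM.isSMulRegular_corner_quotient_blockMinors hx fun d hd ↦
      isSMulRegular_extend hreg (Nat.lt_succ_of_le hd)
  refine ⟨hJM ▸ hIM' ▸ blockMinors_succ_le M p _, fun f _ f' _ h ↦ congrArg Prod.fst h,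
    fun g hg h hh ↦ ?_, fun f hf ↦ ?_, fun g _ h hh ↦ ?_⟩
  · exact hsum ▸ mem_span_singleton_mul_sup_iff.mpr ⟨g, hg, h, hh, rfl⟩
  · exact mem_span_singleton_mul_sup_iff.mp (hsum ▸ hf)
  · exact add_eq_zero_iff_of_isSMulRegular_quotient hJreg hh

end ExactSequence

/-- With `I = I(A)`, `I' = I(A')` (last row and column of `A` deleted),
`J = I(B)` (last column of `A` deleted) and `a = u_{t+c-1,t}`, one has `J ⊆ I'` and the
sequence `0 → J → I' × J → I → 0`, with maps `f ↦ (f, -x_c^a f)` and `(g,h) ↦ x_c^a g + h`,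
is exact: the first map is injective, the second is well defined with values in `I` and
surjective onto `I`, and the kernel of the second map is the image of the first. -/
theorem stmt_3 {k : Type*} [Field k] (c t : ℕ) (hc : 1 ≤ c) (ht : 2 ≤ t)
    (u : Fin (t + c - 1) → Fin t → ℕ)
    (hupos : ∀ j i, 0 < u j i)
    (hurow : ∀ (j j' : Fin (t + c - 1)) (i : Fin t), j ≤ j' → u j i ≤ u j' i)
    (hucol : ∀ (j : Fin (t + c - 1)) (i i' : Fin t), i ≤ i' → u j i ≤ u j i')
    (A : Matrix (Fin t) (Fin (t + c - 1)) (MvPolynomial (Fin c) k))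
    (hA : ∀ i j, A i j =
      if h : i.1 ≤ j.1 ∧ j.1 < i.1 + c
      then X (⟨j.1 - i.1, by omega⟩ : Fin c) ^ u j i else 0)
    (A' : Matrix (Fin (t - 1)) (Fin (t + c - 2)) (MvPolynomial (Fin c) k))
    (hA' : A' = A.submatrix (Fin.castLE (show t - 1 ≤ t by omega))
      (Fin.castLE (show t + c - 2 ≤ t + c - 1 by omega)))
    (B : Matrix (Fin t) (Fin (t + c - 2)) (MvPolynomial (Fin c) k))
    (hB : B = A.submatrix id (Fin.castLE (show t + c - 2 ≤ t + c - 1 by omega)))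
    (I I' J : Ideal (MvPolynomial (Fin c) k))
    (hI : I = maximalMinors A) (hI' : I' = maximalMinors A') (hJ : J = maximalMinors B)
    (xa : MvPolynomial (Fin c) k)
    (hxa : xa = X (⟨c - 1, by omega⟩ : Fin c) ^
      u (⟨t + c - 2, by omega⟩ : Fin (t + c - 1)) (⟨t - 1, by omega⟩ : Fin t)) :
    J ≤ I' ∧
    -- the first map `f ↦ (f, -x_c^a f)` is injective
    (∀ f ∈ J, ∀ f' ∈ J,
      ((f, -(xa * f)) : MvPolynomial (Fin c) k × MvPolynomial (Fin c) k) =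
        (f', -(xa * f')) → f = f') ∧
    -- the second map `(g, h) ↦ x_c^a g + h` takes its values in `I`
    (∀ g ∈ I', ∀ h ∈ J, xa * g + h ∈ I) ∧
    -- the second map is surjective onto `I`
    (∀ p ∈ I, ∃ g ∈ I', ∃ h ∈ J, p = xa * g + h) ∧
    -- the kernel of the second map is exactly the image of the first
    (∀ g ∈ I', ∀ h ∈ J,
      (xa * g + h = 0 ↔ ∃ f ∈ J, g = f ∧ h = -(xa * f))) :=
  stmt_3_general (by omega) (by omega) (by omega) (by omega) X
    (fun d ↦ isSMulRegular_X_quotient_span_X_image (lt_irrefl d))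
    u hupos A hA A' hA' B hB I I' J hI hI' hJ xa hxa
end

section
/- Let t ≥ 2, let A'' be the (t−1)×(t+c−2) matrix obtained from A by deleting its first row and first column, let C be the t×(t+c−2) matrix obtained from A by deleting its first column, and set I = I(A), I'' = I(A''), K = I(C), and b = u_{1,1}. Then K ⊆ I'', and the sequence of R-modules 0 → K → I'' × K → I → 0 is exact, where the first map sends f to (f, −x_1^b·f) and the second map sends (g,h) to x_1^b·g + h; that is, the first map is injective, the second map is well defined (its values lie in I) and surjective onto I, and the kernel of the second map equals the image of the first. -/
open MvPolynomial Matrix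

/-!
The maximal minors of a `t × n` matrix `A` are the values of the map `⋀^t R^n → R` induced by the
rows of `A`, and expanding determinants with a repeated row gives relations between them: together
these form the start `⋀^(t+1) R^n ⊗ R^t → ⋀^t R^n → R` of the Eagon–Northcott complex of `A`.

Suppose that the first column of `A` is `(y, 0, …, 0)`. Separating the `t`-sets of columns that
contain the first column from those that do not gives `I(A) = y I(A'') + I(C)`, and expansion along
the first row gives `I(C) ⊆ I(A'')`. What remains is that `y` is regular modulo `I(C)`.
Here `y` is a power of `x_1`, and `C` becomes modulo `x_1` a matrix of the same shape with one
diagonal fewer. If its complex is exact, then splitting off one factor `x_1` at a time shows that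
every `a ∈ ⋀^t R^(n-1)` whose image in `R` is divisible by `y` is a relation plus a multiple of
`y`, which gives the regularity of `y`. Together with the exactness of the complex of `A''` it also
gives the exactness of the complex of `A`, so exactness follows by induction on the number of
diagonals and the number of rows.
-/

namespace EagonNorthcott

section ColumnSelections

variable {t n : ℕ}

/-- A choice of `t` of the `n` columns of a matrix is encoded as an order embedding
`Fin t ↪o Fin n`. Here a new column `0` is put in front of the matrix and is added to the choice. -/
def consZero (s : Fin t ↪o Fin n) : Fin (t + 1) ↪o Fin (n + 1) :=
  OrderEmbedding.ofStrictMono (Fin.cons 0 fun i => (s i).succ) <|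
    Fin.strictMono_cons.2 ⟨fun i => (s i).succ_pos, Fin.strictMono_succ.comp s.strictMono⟩

/-- The same choice of columns after a new column `0`, not chosen, is put in front of the matrix. -/
def shift (s : Fin t ↪o Fin n) : Fin t ↪o Fin (n + 1) :=
  s.trans (Fin.succOrderEmb n)

/-- The choice of columns with its `j`-th chosen column left out. -/
def erase (s : Fin (t + 1) ↪o Fin n) (j : Fin (t + 1)) : Fin t ↪o Fin n :=
  (Fin.succAboveOrderEmb j).trans s

@[simp] lemma consZero_zero (s : Fin t ↪o Fin n) : consZero s 0 = 0 := rfl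

@[simp] lemma consZero_succ (s : Fin t ↪o Fin n) (i : Fin t) :
    consZero s i.succ = (s i).succ := rfl

@[simp] lemma shift_apply (s : Fin t ↪o Fin n) (i : Fin t) : shift s i = (s i).succ := rfl

@[simp] lemma erase_apply (s : Fin (t + 1) ↪o Fin n) (j : Fin (t + 1)) (i : Fin t) :
    erase s j i = s (j.succAbove i) := rfl

lemma erase_consZero_zero (s : Fin t ↪o Fin n) : erase (consZero s) 0 = shift s := by
  ext i
  simp

lemma erase_consZero_succ (s : Fin (t + 1) ↪o Fin n) (j : Fin (t + 1)) :
    erase (consZero s) j.succ = consZero (erase s j) := by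
  ext i
  cases i using Fin.cases <;> simp

lemma erase_shift (s : Fin (t + 1) ↪o Fin n) (j : Fin (t + 1)) :
    erase (shift s) j = shift (erase s j) := by
  ext i
  simp

lemma exists_shift_eq {s : Fin t ↪o Fin (n + 1)} (hs : ∀ i, s i ≠ 0) :
    ∃ s' : Fin t ↪o Fin n, shift s' = s := by
  refine ⟨OrderEmbedding.ofStrictMono _ (Fin.strictMono_pred_comp hs s.strictMono), ?_⟩
  ext i
  simp

lemma exists_consZero_eq {s : Fin (t + 1) ↪o Fin (n + 1)} (hs : s 0 = 0) :
    ∃ s' : Fin t ↪o Fin n, consZero s' = s := by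
  obtain ⟨s', hs'⟩ := exists_shift_eq (s := erase s 0) fun i => by
    simpa [hs] using (s.strictMono i.succ_pos).ne'
  refine ⟨s', ?_⟩
  ext i
  cases i using Fin.cases with
  | zero => simp [hs]
  | succ i => simpa using congrArg Fin.val (DFunLike.congr_fun hs' i)

lemma exists_consZero_eq_or_exists_shift_eq (s : Fin (t + 1) ↪o Fin (n + 1)) :
    (∃ s' : Fin t ↪o Fin n, consZero s' = s) ∨ ∃ s' : Fin (t + 1) ↪o Fin n, shift s' = s := by
  by_cases hs : s 0 = 0
  · exact .inl (exists_consZero_eq hs)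
  · exact .inr <| exists_shift_eq fun i =>
      ((Fin.pos_of_ne_zero hs).trans_le (s.monotone i.zero_le)).ne'

end ColumnSelections

section Complex

variable {R : Type*} [CommRing R] {t n : ℕ}

/-- The exterior power `⋀^t R^n` as the free module on its standard basis, the increasing
`t`-tuples of indices in `Fin n`. -/
abbrev ExtPow (R : Type*) [CommRing R] (t n : ℕ) : Type _ := (Fin t ↪o Fin n) →₀ R

/-- The map `⋀^t R^n → ⋀^t R^t = R` induced by `A`: basis vectors go to maximal minors. -/
noncomputable def minorMap (A : Matrix (Fin t) (Fin n) R) : ExtPow R t n →ₗ[R] R :=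
  Finsupp.linearCombination R fun s => (A.submatrix id s).det

/-- Contraction `⋀^(t+1) R^n → ⋀^t R^n` against the linear form with coefficients `v`. -/
noncomputable def contract (v : Fin n → R) : ExtPow R (t + 1) n →ₗ[R] ExtPow R t n :=
  Finsupp.linearCombination R fun s =>
    ∑ j, Finsupp.single (erase s j) ((-1) ^ (j : ℕ) * v (s j))

/-- The map `⋀^(t+1) R^n ⊗ R^t → ⋀^t R^n` of the Eagon–Northcott complex of `A`, contracting the
`i`-th component against the `i`-th row; its image consists of the Laplace relations between the
maximal minors of `A`. -/
noncomputable def laplaceMap (A : Matrix (Fin t) (Fin n) R) :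
    (Fin t → ExtPow R (t + 1) n) →ₗ[R] ExtPow R t n :=
  ∑ i, contract (A i) ∘ₗ LinearMap.proj i

@[simp] lemma minorMap_single (A : Matrix (Fin t) (Fin n) R) (s : Fin t ↪o Fin n) (r : R) :
    minorMap A (Finsupp.single s r) = r * (A.submatrix id s).det := by
  simp [minorMap]

lemma contract_single (v : Fin n → R) (s : Fin (t + 1) ↪o Fin n) (r : R) :
    contract v (Finsupp.single s r) =
      r • ∑ j, Finsupp.single (erase s j) ((-1) ^ (j : ℕ) * v (s j)) := by
  simp [contract]

lemma laplaceMap_apply (A : Matrix (Fin t) (Fin n) R) (b : Fin t → ExtPow R (t + 1) n) :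
    laplaceMap A b = ∑ i, contract (A i) (b i) := by
  simp [laplaceMap]

lemma minorMap_contract (A : Matrix (Fin t) (Fin n) R) (v : Fin n → R) (a : ExtPow R (t + 1) n) :
    minorMap A (contract v a) = minorMap (Matrix.of (Fin.cons v A)) a := by
  suffices h : minorMap A ∘ₗ contract v = minorMap (Matrix.of (Fin.cons v A)) from
    LinearMap.congr_fun h a
  refine Finsupp.lhom_ext fun s r => ?_
  rw [LinearMap.comp_apply, contract_single, map_smul, map_sum, minorMap_single, smul_eq_mul,
    det_succ_row_zero]
  congr 1
  refine Finset.sum_congr rfl fun j _ => ?_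
  rw [minorMap_single]
  rfl

lemma minorMap_contract_row (A : Matrix (Fin t) (Fin n) R) (i : Fin t) (a : ExtPow R (t + 1) n) :
    minorMap A (contract (A i) a) = 0 := by
  rw [minorMap_contract]
  suffices h : minorMap (Matrix.of (Fin.cons (A i) A)) = (0 : ExtPow R (t + 1) n →ₗ[R] R) by
    rw [h, LinearMap.zero_apply]
  refine Finsupp.lhom_ext fun s r => ?_
  rw [minorMap_single, det_zero_of_row_eq i.succ_ne_zero.symm rfl, mul_zero,
    LinearMap.zero_apply]

lemma minorMap_laplaceMap (A : Matrix (Fin t) (Fin n) R) (b : Fin t → ExtPow R (t + 1) n) :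
    minorMap A (laplaceMap A b) = 0 := by
  simp only [laplaceMap_apply, map_sum, minorMap_contract_row, Finset.sum_const_zero]

lemma range_minorMap (A : Matrix (Fin t) (Fin n) R) :
    LinearMap.range (minorMap A) = maximalMinors A := by
  apply le_antisymm
  · rw [minorMap, Finsupp.range_linearCombination, Submodule.span_le]
    rintro _ ⟨s, rfl⟩
    exact Ideal.subset_span ⟨s.toEmbedding, rfl⟩
  · refine Submodule.span_le.2 ?_
    rintro _ ⟨g, rfl⟩
    have hmono : StrictMono (g ∘ Tuple.sort g) :=
      (Tuple.monotone_sort g).strictMono_of_injective (g.injective.comp (Tuple.sort g).injective)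
    have hdet : (A.submatrix id (g ∘ Tuple.sort g)).det =
        Equiv.Perm.sign (Tuple.sort g) * (A.submatrix id g).det :=
      det_permute' (Tuple.sort g) (A.submatrix id g)
    refine ⟨Finsupp.single (OrderEmbedding.ofStrictMono _ hmono)
      (Equiv.Perm.sign (Tuple.sort g) : R), ?_⟩
    rw [minorMap_single, OrderEmbedding.coe_ofStrictMono, hdet, ← mul_assoc, ← Int.cast_mul,
      Int.units_coe_mul_self, Int.cast_one, one_mul]

lemma mem_maximalMinors {A : Matrix (Fin t) (Fin n) R} {r : R} :
    r ∈ maximalMinors A ↔ ∃ a, minorMap A a = r := by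
  rw [← range_minorMap, LinearMap.mem_range]


lemma minorMap_submatrix_succ_contract (A : Matrix (Fin (t + 1)) (Fin n) R)
    (a : ExtPow R (t + 1) n) :
    minorMap (A.submatrix Fin.succ id) (contract (A 0) a) = minorMap A a := by
  rw [minorMap_contract]
  congr 1
  exact congrArg _ (Matrix.ext fun i j => by cases i using Fin.cases <;> rfl)

lemma maximalMinors_le_submatrix_succ (A : Matrix (Fin (t + 1)) (Fin n) R) :
    maximalMinors A ≤ maximalMinors (A.submatrix Fin.succ id) := by
  intro r hr
  obtain ⟨a, rfl⟩ := mem_maximalMinors.1 hr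
  exact mem_maximalMinors.2 ⟨_, minorMap_submatrix_succ_contract A a⟩

lemma maximalMinors_submatrix_equiv {m : ℕ} (A : Matrix (Fin t) (Fin n) R) (e : Fin m ≃ Fin n) :
    maximalMinors (A.submatrix id e) = maximalMinors A := by
  refine congrArg Ideal.span (Set.ext fun d => ⟨?_, ?_⟩)
  · rintro ⟨g, rfl⟩
    exact ⟨g.trans e.toEmbedding, rfl⟩
  · rintro ⟨g, rfl⟩
    refine ⟨g.trans e.symm.toEmbedding, congrArg det (Matrix.ext fun i j => ?_)⟩
    simp

lemma contract_mem_range_laplaceMap (A : Matrix (Fin t) (Fin n) R) (i : Fin t)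
    (a : ExtPow R (t + 1) n) : contract (A i) a ∈ LinearMap.range (laplaceMap A) := by
  refine ⟨Pi.single i a, ?_⟩
  rw [laplaceMap_apply, Finset.sum_eq_single i, Pi.single_eq_same]
  · intro j _ hj
    rw [Pi.single_eq_of_ne hj, map_zero]
  · simp

end Complex

section FirstColumn

variable {R : Type*} [CommRing R] {t n : ℕ}

/-- The map `a ↦ e₀ ∧ a`, after renumbering the basis `e₀, …, e_(n-1)` of `R^n` as
`e₁, …, e_n` in `R^(n+1)`. -/
noncomputable def consMap : ExtPow R t n →ₗ[R] ExtPow R (t + 1) (n + 1) :=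
  Finsupp.lmapDomain R R consZero

/-- The map on exterior powers induced by the inclusion `R^n → R^(n+1)` avoiding `e₀`. -/
noncomputable def shiftMap : ExtPow R t n →ₗ[R] ExtPow R t (n + 1) :=
  Finsupp.lmapDomain R R shift

@[simp] lemma consMap_single (s : Fin t ↪o Fin n) (r : R) :
    consMap (Finsupp.single s r) = Finsupp.single (consZero s) r := by
  simp [consMap]

@[simp] lemma shiftMap_single (s : Fin t ↪o Fin n) (r : R) :
    shiftMap (Finsupp.single s r) = Finsupp.single (shift s) r := by
  simp [shiftMap]

lemma exists_eq_consMap_add_shiftMap (a : ExtPow R (t + 1) (n + 1)) :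
    ∃ (b : ExtPow R t n) (e : ExtPow R (t + 1) n), a = consMap b + shiftMap e := by
  induction a using Finsupp.induction_linear with
  | zero => exact ⟨0, 0, by simp⟩
  | add a₁ a₂ h₁ h₂ =>
    obtain ⟨b₁, e₁, rfl⟩ := h₁
    obtain ⟨b₂, e₂, rfl⟩ := h₂
    exact ⟨b₁ + b₂, e₁ + e₂, by rw [map_add, map_add, add_add_add_comm]⟩
  | single s r =>
    obtain ⟨s, rfl⟩ | ⟨s, rfl⟩ := exists_consZero_eq_or_exists_shift_eq s
    · exact ⟨Finsupp.single s r, 0, by simp⟩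
    · exact ⟨0, Finsupp.single s r, by simp⟩

lemma contract_consMap (v : Fin (n + 1) → R) (a : ExtPow R (t + 1) n) :
    contract v (consMap a) = v 0 • shiftMap a - consMap (contract (v ∘ Fin.succ) a) := by
  suffices h : contract v ∘ₗ consMap =
      v 0 • shiftMap - consMap ∘ₗ contract (t := t) (v ∘ Fin.succ) from LinearMap.congr_fun h a
  refine Finsupp.lhom_ext fun s r => ?_
  simp only [LinearMap.comp_apply, LinearMap.sub_apply, LinearMap.smul_apply, consMap_single,
    shiftMap_single, contract_single, map_smul, map_sum]
  rw [Fin.sum_univ_succ, erase_consZero_zero, consZero_zero, smul_add, sub_eq_add_neg, ← smul_neg,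
    ← Finset.sum_neg_distrib]
  congr 1
  · rw [Finsupp.smul_single, Finsupp.smul_single, Fin.val_zero, pow_zero, one_mul, smul_eq_mul,
      smul_eq_mul, mul_comm]
  · congr 1
    refine Finset.sum_congr rfl fun j _ => ?_
    rw [erase_consZero_succ, consZero_succ, ← Finsupp.single_neg, Fin.val_succ, pow_succ',
      neg_one_mul, neg_mul, Function.comp_apply]

lemma contract_shiftMap (v : Fin (n + 1) → R) (a : ExtPow R (t + 1) n) :
    contract v (shiftMap a) = shiftMap (contract (v ∘ Fin.succ) a) := by
  suffices h : contract v ∘ₗ shiftMap = shiftMap ∘ₗ contract (t := t) (v ∘ Fin.succ) from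
    LinearMap.congr_fun h a
  refine Finsupp.lhom_ext fun s r => ?_
  simp only [LinearMap.comp_apply, shiftMap_single, contract_single, map_smul, map_sum,
    erase_shift, shift_apply, Function.comp_apply]

lemma minorMap_shiftMap (A : Matrix (Fin t) (Fin (n + 1)) R) (a : ExtPow R t n) :
    minorMap A (shiftMap a) = minorMap (A.submatrix id Fin.succ) a := by
  suffices h : minorMap A ∘ₗ shiftMap = minorMap (A.submatrix id Fin.succ) from
    LinearMap.congr_fun h a
  refine Finsupp.lhom_ext fun s r => ?_
  rw [LinearMap.comp_apply, shiftMap_single, minorMap_single, minorMap_single]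
  rfl

lemma shiftMap_laplaceMap_mem_range (A : Matrix (Fin t) (Fin (n + 1)) R)
    (b : Fin t → ExtPow R (t + 1) n) :
    shiftMap (laplaceMap (A.submatrix id Fin.succ) b) ∈ LinearMap.range (laplaceMap A) := by
  rw [laplaceMap_apply, map_sum]
  refine Submodule.sum_mem _ fun i _ => ?_
  exact contract_shiftMap (A i) (b i) ▸ contract_mem_range_laplaceMap A i _

variable {A : Matrix (Fin (t + 1)) (Fin (n + 1)) R}

lemma minorMap_consMap (hA : ∀ i : Fin t, A i.succ 0 = 0) (a : ExtPow R t n) :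
    minorMap A (consMap a) = A 0 0 * minorMap (A.submatrix Fin.succ Fin.succ) a := by
  suffices h : minorMap A ∘ₗ consMap = A 0 0 • minorMap (A.submatrix Fin.succ Fin.succ) from
    LinearMap.congr_fun h a
  refine Finsupp.lhom_ext fun s r => ?_
  have hdet : (A.submatrix id (consZero s)).det =
      A 0 0 * ((A.submatrix Fin.succ Fin.succ).submatrix id s).det := by
    rw [det_succ_column_zero, Fin.sum_univ_succ, Finset.sum_eq_zero fun i _ => by simp [hA],
      add_zero, Fin.val_zero, pow_zero, one_mul]
    rfl
  rw [LinearMap.comp_apply, consMap_single, minorMap_single, LinearMap.smul_apply,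
    minorMap_single, smul_eq_mul, hdet, mul_left_comm]

lemma consMap_laplaceMap_mem_range (hA : ∀ i : Fin t, A i.succ 0 = 0)
    (b : Fin t → ExtPow R (t + 1) n) :
    consMap (laplaceMap (A.submatrix Fin.succ Fin.succ) b) ∈ LinearMap.range (laplaceMap A) := by
  rw [laplaceMap_apply, map_sum]
  refine Submodule.sum_mem _ fun i _ => ?_
  have h := contract_consMap (A i.succ) (b i)
  rw [hA, zero_smul, zero_sub] at h
  exact (Submodule.neg_mem_iff _).1 (h ▸ contract_mem_range_laplaceMap A i.succ _)

lemma mem_maximalMinors_iff_of_column_eq_zero (hA : ∀ i : Fin t, A i.succ 0 = 0) {p : R} :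
    p ∈ maximalMinors A ↔
      ∃ g ∈ maximalMinors (A.submatrix Fin.succ Fin.succ),
        ∃ h ∈ maximalMinors (A.submatrix id Fin.succ), p = A 0 0 * g + h := by
  simp only [mem_maximalMinors]
  constructor
  · rintro ⟨a, rfl⟩
    obtain ⟨b, e, rfl⟩ := exists_eq_consMap_add_shiftMap a
    exact ⟨_, ⟨b, rfl⟩, _, ⟨e, rfl⟩, by rw [map_add, minorMap_consMap hA, minorMap_shiftMap]⟩
  · rintro ⟨_, ⟨b, rfl⟩, _, ⟨e, rfl⟩, rfl⟩
    exact ⟨consMap b + shiftMap e, by rw [map_add, minorMap_consMap hA, minorMap_shiftMap]⟩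

end FirstColumn

section Exactness

variable {R : Type*} [CommRing R] {t n : ℕ} {x y : R}

/-- Exactness at `⋀^t R^n` of the start of the Eagon–Northcott complex of `A` after reduction modulo
`y`, expressed by elements of `R`. -/
def ExactMod (A : Matrix (Fin t) (Fin n) R) (y : R) : Prop :=
  ∀ a, y ∣ minorMap A a → ∃ b a', a = laplaceMap A b + y • a'

lemma ExactMod.pow {A : Matrix (Fin t) (Fin n) R} (hA : ExactMod A x) (hx : IsSMulRegular R x)
    (m : ℕ) : ExactMod A (x ^ m) := by
  induction m with
  | zero => exact fun a _ => ⟨0, a, by simp⟩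
  | succ m ih =>
    rintro a ⟨r, hr⟩
    obtain ⟨b, a, rfl⟩ := hA a ⟨x ^ m * r, by rw [hr, pow_succ', mul_assoc]⟩
    rw [map_add, minorMap_laplaceMap, zero_add, map_smul, pow_succ', mul_assoc] at hr
    obtain ⟨b', a', rfl⟩ := ih a ⟨r, hx hr⟩
    exact ⟨b + x • b', a', by rw [map_add, map_smul, smul_add, smul_smul, pow_succ', add_assoc]⟩

lemma ExactMod.isSMulRegular_quotient {A : Matrix (Fin t) (Fin n) R} (hA : ExactMod A y)
    (hy : IsSMulRegular R y) : IsSMulRegular (R ⧸ maximalMinors A) y := by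
  refine (isSMulRegular_quotient_iff_mem_of_smul_mem _ _).2 fun g hg => ?_
  obtain ⟨a, ha⟩ := mem_maximalMinors.1 hg
  obtain ⟨b, a', rfl⟩ := hA a ⟨g, ha⟩
  rw [map_add, minorMap_laplaceMap, zero_add, map_smul] at ha
  exact mem_maximalMinors.2 ⟨a', hy ha⟩

lemma exact_laplaceMap_minorMap_of_lt (h : n < t) (A : Matrix (Fin t) (Fin n) R) :
    Function.Exact (laplaceMap A) (minorMap A) := by
  have : IsEmpty (Fin t ↪o Fin n) := ⟨fun s =>
    h.not_ge (by simpa only [Fintype.card_fin] using Fintype.card_le_of_embedding s.toEmbedding)⟩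
  exact fun a => ⟨fun _ => ⟨0, Subsingleton.elim _ _⟩, fun _ => Subsingleton.elim a 0 ▸ map_zero _⟩

lemma exact_laplaceMap_minorMap_of_zero_rows (A : Matrix (Fin 0) (Fin n) R) :
    Function.Exact (laplaceMap A) (minorMap A) := by
  refine LinearMap.exact_of_comp_of_mem_range (LinearMap.ext (minorMap_laplaceMap A)) fun a ha => ?_
  have huniq : Unique (Fin 0 ↪o Fin n) :=
    ⟨⟨Fin.castLEOrderEmb n.zero_le⟩, fun s => by ext i; exact i.elim0⟩
  suffices a = 0 by rw [this]; exact zero_mem _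
  rw [Finsupp.unique_single a, minorMap_single, det_isEmpty, mul_one] at ha
  rw [Finsupp.unique_single a, ha, Finsupp.single_zero]

theorem exact_laplaceMap_minorMap_of_exactMod {A : Matrix (Fin (t + 1)) (Fin (n + 1)) R}
    (hA : ∀ i : Fin t, A i.succ 0 = 0) (hreg : IsSMulRegular R (A 0 0))
    (hmod : ExactMod (A.submatrix id Fin.succ) (A 0 0))
    (hexact : Function.Exact (laplaceMap (A.submatrix Fin.succ Fin.succ))
      (minorMap (A.submatrix Fin.succ Fin.succ))) :
    Function.Exact (laplaceMap A) (minorMap A) := by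
  refine LinearMap.exact_of_comp_of_mem_range (LinearMap.ext (minorMap_laplaceMap A)) fun a ha => ?_
  obtain ⟨a, e, rfl⟩ := exists_eq_consMap_add_shiftMap a
  rw [map_add, minorMap_consMap hA, minorMap_shiftMap] at ha
  obtain ⟨b, e, rfl⟩ := hmod e ((dvd_add_right (dvd_mul_right _ _)).1 (ha ▸ dvd_zero _))
  rw [map_add, minorMap_laplaceMap, zero_add, map_smul, smul_eq_mul, ← mul_add] at ha
  have hsum : minorMap (A.submatrix Fin.succ Fin.succ) (a + contract (A 0 ∘ Fin.succ) e) = 0 := by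
    rw [map_add]
    refine Eq.trans (congrArg _ ?_) (hreg (ha.trans (mul_zero _).symm))
    exact minorMap_submatrix_succ_contract (A.submatrix id Fin.succ) e
  obtain ⟨b', hb'⟩ := (hexact _).1 hsum
  have hcons := consMap_laplaceMap_mem_range hA b'
  have hrow := contract_mem_range_laplaceMap A 0 (consMap e)
  rw [hb', map_add] at hcons
  rw [contract_consMap] at hrow
  convert add_mem (add_mem hcons hrow) (shiftMap_laplaceMap_mem_range A b) using 1
  rw [map_add, map_smul]
  abel

end Exactness

section Reduction

variable {R S : Type*} [CommRing R] [CommRing S] {t n : ℕ} {x : R} (π : R →+* S)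

/-- Base change of `⋀^t R^n` along the ring homomorphism `π`. -/
noncomputable def reduce : ExtPow R t n →ₛₗ[π] ExtPow S t n :=
  Finsupp.mapRange.linearMap π.toSemilinearMap

@[simp] lemma reduce_apply (a : ExtPow R t n) (s : Fin t ↪o Fin n) :
    reduce π a s = π (a s) := rfl

@[simp] lemma reduce_single (s : Fin t ↪o Fin n) (r : R) :
    reduce π (Finsupp.single s r) = Finsupp.single s (π r) := by
  simp [reduce]

lemma minorMap_reduce (A : Matrix (Fin t) (Fin n) R) (a : ExtPow R t n) :
    minorMap (A.map π) (reduce π a) = π (minorMap A a) := by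
  induction a using Finsupp.induction_linear with
  | zero => simp only [map_zero]
  | add a b ha hb => simp only [map_add, ha, hb]
  | single s r =>
    rw [reduce_single, minorMap_single, minorMap_single, map_mul, RingHom.map_det]
    rfl

lemma contract_reduce (v : Fin n → R) (a : ExtPow R (t + 1) n) :
    contract (π ∘ v) (reduce π a) = reduce π (contract v a) := by
  induction a using Finsupp.induction_linear with
  | zero => simp only [map_zero]
  | add a b ha hb => simp only [map_add, ha, hb]
  | single s r =>
    simp only [reduce_single, contract_single, map_sum, map_smulₛₗ, map_mul, map_pow, map_neg,
      map_one, Function.comp_apply]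

lemma laplaceMap_reduce (A : Matrix (Fin t) (Fin n) R) (b : Fin t → ExtPow R (t + 1) n) :
    laplaceMap (A.map π) (fun i => reduce π (b i)) = reduce π (laplaceMap A b) := by
  simp only [laplaceMap_apply, map_sum, ← contract_reduce]
  rfl

variable {π}

lemma reduce_surjective (hπ : Function.Surjective π) :
    Function.Surjective (reduce π : ExtPow R t n → ExtPow S t n) :=
  Finsupp.mapRange_surjective _ (map_zero π) hπ

lemma exists_eq_smul_of_reduce_eq_zero (hπ : RingHom.ker π = Ideal.span {x}) {a : ExtPow R t n}
    (ha : reduce π a = 0) : ∃ a', a = x • a' := by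
  have hdvd (s : Fin t ↪o Fin n) : x ∣ a s := by
    rw [← Ideal.mem_span_singleton, ← hπ, RingHom.mem_ker, ← reduce_apply, ha, Finsupp.zero_apply]
  choose f hf using hdvd
  exact ⟨Finsupp.equivFunOnFinite.symm f, Finsupp.ext hf⟩

lemma ExactMod.of_exact_map (hπ : Function.Surjective π) (hker : RingHom.ker π = Ideal.span {x})
    {A : Matrix (Fin t) (Fin n) R}
    (hA : Function.Exact (laplaceMap (A.map π)) (minorMap (A.map π))) : ExactMod A x := by
  intro a ha
  have hmin : minorMap (A.map π) (reduce π a) = 0 := by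
    rwa [minorMap_reduce, ← RingHom.mem_ker, hker, Ideal.mem_span_singleton]
  obtain ⟨b, hb⟩ := (hA _).1 hmin
  choose b' hb' using fun i => reduce_surjective hπ (b i)
  obtain ⟨a', ha'⟩ := exists_eq_smul_of_reduce_eq_zero hker (a := a - laplaceMap A b') (by
    rw [map_sub, ← laplaceMap_reduce, funext hb', hb, sub_self])
  exact ⟨b', a', by rw [← ha', add_sub_cancel]⟩

end Reduction

section RegularSequence

open RingTheory.Sequence

variable {R : Type*} [CommRing R]

open scoped Pointwise in
lemma isWeaklyRegular_map_quotientMk {r : R} {rs : List R} (h : IsWeaklyRegular R (r :: rs)) :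
    IsWeaklyRegular (R ⧸ Ideal.span {r}) (rs.map (Ideal.Quotient.mk (Ideal.span {r}))) := by
  have hr : r • (⊤ : Submodule R R) = Ideal.span {r} := by
    rw [← Submodule.ideal_span_singleton_smul, smul_eq_mul, Ideal.mul_top]
  have e : QuotSMulTop r R ≃ₗ[R] R ⧸ Ideal.span {r} := Submodule.quotEquivOfEq _ _ hr
  exact (isWeaklyRegular_map_algebraMap_iff _ _ rs).2 <|
    (e.isWeaklyRegular_congr rs).1 ((isWeaklyRegular_cons_iff R r rs).1 h).2

lemma isWeaklyRegular_ofFn_succ {c : ℕ} {x : Fin (c + 1) → R}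
    (hx : IsWeaklyRegular R (List.ofFn x)) :
    IsSMulRegular R (x 0) ∧ IsWeaklyRegular (R ⧸ Ideal.span {x 0})
      (List.ofFn fun d : Fin c => Ideal.Quotient.mk (Ideal.span {x 0}) (x d.succ)) := by
  rw [List.ofFn_succ] at hx
  have hquot := isWeaklyRegular_map_quotientMk hx
  rw [List.map_ofFn] at hquot
  exact ⟨((isWeaklyRegular_cons_iff R _ _).1 hx).1, hquot⟩

lemma isSMulRegular_X_quotient_span_X_image {σ : Type*} {s : Set σ} {i : σ} (hi : i ∉ s) :
    IsSMulRegular (MvPolynomial σ R ⧸ Ideal.span (X '' s : Set (MvPolynomial σ R)))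
      (X i : MvPolynomial σ R) := by
  refine (isSMulRegular_quotient_iff_mem_of_smul_mem _ _).2 fun p hp => ?_
  rw [smul_eq_mul, mem_ideal_span_X_image] at hp
  refine mem_ideal_span_X_image.2 fun m hm => ?_
  obtain ⟨j, hj, hmj⟩ := hp (Finsupp.single i 1 + m) (by simpa [mem_support_iff] using hm)
  have hij : i ≠ j := fun h => hi (h ▸ hj)
  exact ⟨j, hj, by simpa [Finsupp.single_apply, hij] using hmj⟩

lemma isWeaklyRegular_ofFn_X (c : ℕ) :
    IsWeaklyRegular (MvPolynomial (Fin c) R) (List.ofFn (X : Fin c → MvPolynomial (Fin c) R)) := by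
  refine ⟨fun i hi => ?_⟩
  have htake : {q | q ∈ (List.ofFn (X : Fin c → MvPolynomial (Fin c) R)).take i} =
      X '' {j : Fin c | (j : ℕ) < i} := by
    ext q
    simp only [List.mem_take_iff_getElem, List.getElem_ofFn, List.length_ofFn, lt_min_iff,
      Set.mem_ofPred_eq, Set.mem_image, Fin.exists_iff]
    grind
  rw [smul_eq_mul, Ideal.mul_top, Ideal.ofList, htake, List.getElem_ofFn]
  exact isSMulRegular_X_quotient_span_X_image (lt_irrefl i)

end RegularSequence

section PowerDiagonals

open RingTheory.Sequence

variable {R : Type*} [CommRing R] {c t n : ℕ}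

/-- The `d`-th diagonal of `A`, counted from the main diagonal `d = 0`, consists of positive powers
of `x d`, and everything below the main diagonal vanishes. Entries to the right of the `c`
diagonals are arbitrary. -/
structure HasPowerDiagonals (x : Fin c → R) (A : Matrix (Fin t) (Fin n) R) : Prop where
  exists_eq_pow (i : Fin t) (j : Fin n) (d : Fin c) (h : (j : ℕ) = i + d) :
    ∃ m ≠ 0, A i j = x d ^ m
  eq_zero (i : Fin t) (j : Fin n) (h : (j : ℕ) < i) : A i j = 0

namespace HasPowerDiagonals

lemma submatrix_succ_succ {x : Fin c → R} {A : Matrix (Fin (t + 1)) (Fin (n + 1)) R}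
    (hA : HasPowerDiagonals x A) : HasPowerDiagonals x (A.submatrix Fin.succ Fin.succ) where
  exists_eq_pow i j d h := hA.exists_eq_pow i.succ j.succ d (by simp only [Fin.val_succ]; omega)
  eq_zero i j h := hA.eq_zero i.succ j.succ (Nat.succ_lt_succ h)

lemma map_submatrix_succ {S : Type*} [CommRing S] {π : R →+* S} {x : Fin (c + 1) → R}
    (hπ : π (x 0) = 0) {A : Matrix (Fin t) (Fin (n + 1)) R} (hA : HasPowerDiagonals x A) :
    HasPowerDiagonals (fun d : Fin c => π (x d.succ)) ((A.submatrix id Fin.succ).map π) where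
  exists_eq_pow i j d h := by
    obtain ⟨m, hm, hA⟩ := hA.exists_eq_pow i j.succ d.succ (by simp only [Fin.val_succ]; omega)
    exact ⟨m, hm, by simp only [map_apply, submatrix_apply, id_eq, hA, map_pow]⟩
  eq_zero i j h := by
    simp only [map_apply, submatrix_apply, id_eq]
    obtain hj | hj := (Nat.succ_le_of_lt h).eq_or_lt
    · obtain ⟨m, hm, hA⟩ := hA.exists_eq_pow i j.succ 0 hj
      rw [hA, map_pow, hπ, zero_pow hm]
    · rw [hA.eq_zero i j.succ hj, map_zero]

lemma exists_apply_zero_zero_eq_pow {x : Fin (c + 1) → R}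
    {A : Matrix (Fin (t + 1)) (Fin (n + 1)) R} (hA : HasPowerDiagonals x A) :
    ∃ m, A 0 0 = x 0 ^ m :=
  let ⟨m, _, hm⟩ := hA.exists_eq_pow 0 0 0 rfl
  ⟨m, hm⟩

lemma apply_succ_zero {x : Fin c → R} {A : Matrix (Fin (t + 1)) (Fin (n + 1)) R}
    (hA : HasPowerDiagonals x A) (i : Fin t) : A i.succ 0 = 0 :=
  hA.eq_zero i.succ 0 i.val.succ_pos

lemma isSMulRegular_apply_zero_zero {x : Fin (c + 1) → R} (hx : IsSMulRegular R (x 0))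
    {A : Matrix (Fin (t + 1)) (Fin (n + 1)) R} (hA : HasPowerDiagonals x A) :
    IsSMulRegular R (A 0 0) := by
  obtain ⟨m, hm⟩ := hA.exists_apply_zero_zero_eq_pow
  exact hm ▸ hx.pow m

lemma exactMod_apply_zero_zero {x : Fin (c + 1) → R} (hx : IsSMulRegular R (x 0))
    {A : Matrix (Fin (t + 1)) (Fin (n + 1)) R} (hA : HasPowerDiagonals x A)
    (hexact : Function.Exact
      (laplaceMap ((A.submatrix id Fin.succ).map (Ideal.Quotient.mk (Ideal.span {x 0}))))
      (minorMap ((A.submatrix id Fin.succ).map (Ideal.Quotient.mk (Ideal.span {x 0}))))) :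
    ExactMod (A.submatrix id Fin.succ) (A 0 0) := by
  obtain ⟨m, hm⟩ := hA.exists_apply_zero_zero_eq_pow
  have hmod : ExactMod (A.submatrix id Fin.succ) (x 0) :=
    .of_exact_map Ideal.Quotient.mk_surjective Ideal.mk_ker hexact
  exact hm ▸ hmod.pow hx m

theorem exact {x : Fin c → R} (hx : IsWeaklyRegular R (List.ofFn x))
    {A : Matrix (Fin t) (Fin n) R} (hA : HasPowerDiagonals x A) (hn : n + 1 = t + c) :
    Function.Exact (laplaceMap A) (minorMap A) := by
  induction c generalizing R t n with
  | zero => exact exact_laplaceMap_minorMap_of_lt (by omega) A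
  | succ c ihc =>
    obtain ⟨hx0, hxquot⟩ := isWeaklyRegular_ofFn_succ hx
    induction t generalizing n with
    | zero => exact exact_laplaceMap_minorMap_of_zero_rows A
    | succ t iht =>
      obtain ⟨n, rfl⟩ : ∃ m, n = m + 1 := ⟨t + c, by omega⟩
      have hquot := ihc hxquot
        (hA.map_submatrix_succ (Ideal.Quotient.mk_singleton_self (x 0))) (by omega)
      exact exact_laplaceMap_minorMap_of_exactMod hA.apply_succ_zero
        (hA.isSMulRegular_apply_zero_zero hx0) (hA.exactMod_apply_zero_zero hx0 hquot)
        (iht hA.submatrix_succ_succ (by omega))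

theorem isSMulRegular_quotient_maximalMinors {x : Fin (c + 1) → R}
    (hx : IsWeaklyRegular R (List.ofFn x)) {A : Matrix (Fin (t + 1)) (Fin (n + 1)) R}
    (hA : HasPowerDiagonals x A) (hn : n = t + c) :
    IsSMulRegular (R ⧸ maximalMinors (A.submatrix id Fin.succ)) (A 0 0) := by
  obtain ⟨hx0, hxquot⟩ := isWeaklyRegular_ofFn_succ hx
  have hquot := exact hxquot
    (hA.map_submatrix_succ (Ideal.Quotient.mk_singleton_self (x 0))) (by omega)
  exact (hA.exactMod_apply_zero_zero hx0 hquot).isSMulRegular_quotient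
    (hA.isSMulRegular_apply_zero_zero hx0)

lemma of_band {x : Fin c → R} {u : Fin n → Fin t → ℕ} (hu : ∀ j i, 0 < u j i)
    {A : Matrix (Fin t) (Fin n) R}
    (hA : ∀ i j, A i j = if h : i.1 ≤ j.1 ∧ j.1 < i.1 + c
      then x ⟨j.1 - i.1, by omega⟩ ^ u j i else 0) : HasPowerDiagonals x A where
  exists_eq_pow i j d h := by
    have hd : (⟨j.1 - i.1, by omega⟩ : Fin c) = d := Fin.ext (by simp only; omega)
    exact ⟨u j i, (hu j i).ne', by rw [hA, dif_pos ⟨by omega, by omega⟩, hd]⟩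
  eq_zero i j h := by rw [hA, dif_neg (by omega)]

end HasPowerDiagonals

end PowerDiagonals

end EagonNorthcott

open EagonNorthcott RingTheory.Sequence in
theorem stmt_4_general {R : Type*} [CommRing R] (c t : ℕ) (hc : 1 ≤ c) (ht : 1 ≤ t)
    (x : Fin c → R) (hx : IsWeaklyRegular R (List.ofFn x))
    (A : Matrix (Fin t) (Fin (t + c - 1)) R) (hA : HasPowerDiagonals x A)
    (A'' : Matrix (Fin (t - 1)) (Fin (t + c - 2)) R)
    (hA'' : A'' = A.submatrix
      (fun i : Fin (t - 1) => (⟨i.1 + 1, by have := i.isLt; omega⟩ : Fin t))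
      (fun j : Fin (t + c - 2) => (⟨j.1 + 1, by have := j.isLt; omega⟩ : Fin (t + c - 1))))
    (C : Matrix (Fin t) (Fin (t + c - 2)) R)
    (hC : C = A.submatrix id
      (fun j : Fin (t + c - 2) => (⟨j.1 + 1, by have := j.isLt; omega⟩ : Fin (t + c - 1))))
    (I I'' K : Ideal R)
    (hI : I = maximalMinors A) (hI'' : I'' = maximalMinors A'') (hK : K = maximalMinors C)
    (xb : R) (hxb : xb = A ⟨0, by omega⟩ ⟨0, by omega⟩) :
    K ≤ I'' ∧
    (∀ f ∈ K, ∀ f' ∈ K, ((f, -(xb * f)) : R × R) = (f', -(xb * f')) → f = f') ∧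
    (∀ g ∈ I'', ∀ h ∈ K, xb * g + h ∈ I) ∧
    (∀ p ∈ I, ∃ g ∈ I'', ∃ h ∈ K, p = xb * g + h) ∧
    (∀ g ∈ I'', ∀ h ∈ K, (xb * g + h = 0 ↔ ∃ f ∈ K, g = f ∧ h = -(xb * f))) := by
  obtain ⟨c, rfl⟩ := Nat.exists_eq_add_of_le' hc
  obtain ⟨t, rfl⟩ := Nat.exists_eq_add_of_le' ht
  have hn : t + 1 + (c + 1) - 2 + 1 = t + 1 + (c + 1) - 1 := by omega
  let B := A.submatrix id (finCongr hn)
  have hB : HasPowerDiagonals x B :=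
    ⟨fun i j => hA.exists_eq_pow i (finCongr hn j), fun i j => hA.eq_zero i (finCongr hn j)⟩
  have hIB : I = maximalMinors B := hI.trans (maximalMinors_submatrix_equiv A _).symm
  change A'' = B.submatrix Fin.succ Fin.succ at hA''
  change C = B.submatrix id Fin.succ at hC
  change xb = B 0 0 at hxb
  subst hA'' hC hxb hI'' hK hIB
  have hmem {p : R} := mem_maximalMinors_iff_of_column_eq_zero hB.apply_succ_zero (p := p)
  refine ⟨maximalMinors_le_submatrix_succ (B.submatrix id Fin.succ),
    fun f _ f' _ h => congrArg Prod.fst h, fun g hg h hh => hmem.2 ⟨g, hg, h, hh, rfl⟩,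
    fun p hp => hmem.1 hp, fun g _ h hh => ⟨fun hgh => ?_, ?_⟩⟩
  · obtain rfl : h = -(B 0 0 * g) := eq_neg_of_add_eq_zero_right hgh
    have hreg := hB.isSMulRegular_quotient_maximalMinors hx (by omega)
    exact ⟨g, mem_of_isSMulRegular_quotient_of_smul_mem hreg (neg_mem_iff.1 hh), rfl, rfl⟩
  · rintro ⟨f, _, rfl, rfl⟩
    exact add_neg_cancel _

/-- With `I = I(A)`, `I'' = I(A'')` (first row and column of `A` deleted),
`K = I(C)` (first column of `A` deleted) and `b = u_{1,1}`, one has `K ⊆ I''` and the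
sequence `0 → K → I'' × K → I → 0`, with maps `f ↦ (f, -x_1^b f)` and `(g,h) ↦ x_1^b g + h`,
is exact: the first map is injective, the second is well defined with values in `I` and
surjective onto `I`, and the kernel of the second map is the image of the first. -/
theorem stmt_4 {k : Type*} [Field k] (c t : ℕ) (hc : 1 ≤ c) (ht : 2 ≤ t)
    (u : Fin (t + c - 1) → Fin t → ℕ)
    (hupos : ∀ j i, 0 < u j i)
    (hurow : ∀ (j j' : Fin (t + c - 1)) (i : Fin t), j ≤ j' → u j i ≤ u j' i)
    (hucol : ∀ (j : Fin (t + c - 1)) (i i' : Fin t), i ≤ i' → u j i ≤ u j i')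
    (A : Matrix (Fin t) (Fin (t + c - 1)) (MvPolynomial (Fin c) k))
    (hA : ∀ i j, A i j =
      if h : i.1 ≤ j.1 ∧ j.1 < i.1 + c
      then X (⟨j.1 - i.1, by omega⟩ : Fin c) ^ u j i else 0)
    (A'' : Matrix (Fin (t - 1)) (Fin (t + c - 2)) (MvPolynomial (Fin c) k))
    (hA'' : A'' = A.submatrix
      (fun i : Fin (t - 1) => (⟨i.1 + 1, by have := i.isLt; omega⟩ : Fin t))
      (fun j : Fin (t + c - 2) => (⟨j.1 + 1, by have := j.isLt; omega⟩ : Fin (t + c - 1))))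
    (C : Matrix (Fin t) (Fin (t + c - 2)) (MvPolynomial (Fin c) k))
    (hC : C = A.submatrix id
      (fun j : Fin (t + c - 2) => (⟨j.1 + 1, by have := j.isLt; omega⟩ : Fin (t + c - 1))))
    (I I'' K : Ideal (MvPolynomial (Fin c) k))
    (hI : I = maximalMinors A) (hI'' : I'' = maximalMinors A'') (hK : K = maximalMinors C)
    (xb : MvPolynomial (Fin c) k)
    (hxb : xb = X (⟨0, by omega⟩ : Fin c) ^
      u (⟨0, by omega⟩ : Fin (t + c - 1)) (⟨0, by omega⟩ : Fin t)) :
    K ≤ I'' ∧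
    -- the first map `f ↦ (f, -x_1^b f)` is injective
    (∀ f ∈ K, ∀ f' ∈ K,
      ((f, -(xb * f)) : MvPolynomial (Fin c) k × MvPolynomial (Fin c) k) =
        (f', -(xb * f')) → f = f') ∧
    -- the second map `(g, h) ↦ x_1^b g + h` takes its values in `I`
    (∀ g ∈ I'', ∀ h ∈ K, xb * g + h ∈ I) ∧
    -- the second map is surjective onto `I`
    (∀ p ∈ I, ∃ g ∈ I'', ∃ h ∈ K, p = xb * g + h) ∧
    -- the kernel of the second map is exactly the image of the first
    (∀ g ∈ I'', ∀ h ∈ K,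
      (xb * g + h = 0 ↔ ∃ f ∈ K, g = f ∧ h = -(xb * f))) :=
  stmt_4_general c t hc (by omega) X (EagonNorthcott.isWeaklyRegular_ofFn_X c) A
    (.of_band hupos hA) A'' hA'' C hC I I'' K hI hI'' hK xb
    (by simpa [hA, Nat.lt_of_succ_le hc] using hxb)
end

section
/- The radical of the ideal I(A) of maximal minors of A equals the ideal (x_1, …, x_c) of R generated by all the variables. In particular, the determinantal ideal I(A) has height (codimension) c in R. -/
open MvPolynomial Matrix

/-- The height (codimension) of an ideal: the infimum of the heights of the prime ideals
containing it. -/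
noncomputable def idealHeight {S : Type*} [CommRing S] (I : Ideal S) : ℕ∞ :=
  ⨅ p ∈ {p : PrimeSpectrum S | I ≤ p.asIdeal}, Order.height p

/-!
Let `J` be a radical ideal containing the maximal minors of the band matrix, and suppose that the
entries `x_1, …, x_{l-1}` already lie in `J`. Modulo `J`, the columns `l, …, l + t - 1` form an
upper triangular matrix with powers of `x_l` on the diagonal, so a power of `x_l`, and hence `x_l`
itself, lies in `J`. Thus a radical ideal contains the minors iff it contains `(x_1, …, x_c)`.

In the polynomial ring, Krull's theorem bounds the height of `(x_1, …, x_c)` by `c`. For the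
converse bound, a prime `P` containing a variable `X a` strictly contains a prime that omits `X a`
and keeps all the other variables of `P`: let `X a` become transcendental over the quotient by `P`.
-/

section MaximalMinors

variable {S S' : Type*} [CommRing S] [CommRing S'] {p q : ℕ}

theorem map_maximalMinors (f : S →+* S') (M : Matrix (Fin p) (Fin q) S) :
    (maximalMinors M).map f = maximalMinors (M.map f) := by
  have hdet (g : Fin p ↪ Fin q) : f (M.submatrix id g).det = ((M.map f).submatrix id g).det :=
    f.map_det _
  rw [maximalMinors, maximalMinors, Ideal.map_span]
  congr 1
  ext d
  constructor
  · rintro ⟨_, ⟨g, rfl⟩, rfl⟩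
    exact ⟨g, hdet g⟩
  · rintro ⟨g, rfl⟩
    exact ⟨_, ⟨g, rfl⟩, hdet g⟩

theorem maximalMinors_zero (hp : 0 < p) : maximalMinors (0 : Matrix (Fin p) (Fin q) S) = ⊥ := by
  have : Nonempty (Fin p) := ⟨⟨0, hp⟩⟩
  rw [maximalMinors, Ideal.span_eq_bot]
  rintro _ ⟨g, rfl⟩
  exact Matrix.det_zero

end MaximalMinors

section BandMatrix

variable {S S' : Type*} [CommRing S] [CommRing S'] {c t q : ℕ}

/-- The `t × q` band matrix with entries `x (j - i) ^ u j i` for `i ≤ j < i + c` and `0` elsewhere;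
the matrix of the paper is the case `q = t + c - 1`. As there, the column index of `u` comes
first. -/
def bandMatrix (x : Fin c → S) (u : Fin q → Fin t → ℕ) : Matrix (Fin t) (Fin q) S :=
  fun i j ↦ if h : i.1 ≤ j.1 ∧ j.1 < i.1 + c then x ⟨j.1 - i.1, by omega⟩ ^ u j i else 0

theorem bandMatrix_map (f : S →+* S') (x : Fin c → S) (u : Fin q → Fin t → ℕ) :
    (bandMatrix x u).map f = bandMatrix (f ∘ x) u := by
  ext i j
  simp only [bandMatrix, Matrix.map_apply, Function.comp_apply, apply_dite f, map_pow, map_zero]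

theorem bandMatrix_zero {u : Fin q → Fin t → ℕ} (hu : ∀ j i, 0 < u j i) :
    bandMatrix (0 : Fin c → S) u = 0 := by
  ext i j
  simp [bandMatrix, (hu j i).ne']

/-- The choice of the `t` consecutive columns `l, …, l + t - 1`, which places `x_l` on the
diagonal of the resulting submatrix of `bandMatrix x u`. -/
def consecutiveColumns (t : ℕ) (l : Fin c) : Fin t ↪ Fin (t + c - 1) where
  toFun i := ⟨i.1 + l.1, by omega⟩
  inj' i i' h := by simpa [Fin.ext_iff] using h

@[simp]
theorem consecutiveColumns_val (l : Fin c) (i : Fin t) :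
    (consecutiveColumns t l i : ℕ) = i + l := rfl

variable {u : Fin (t + c - 1) → Fin t → ℕ}

theorem bandMatrix_consecutiveColumns_self (x : Fin c → S) (l : Fin c) (i : Fin t) :
    bandMatrix x u i (consecutiveColumns t l i) = x l ^ u (consecutiveColumns t l i) i := by
  simp [bandMatrix]

theorem isUpperTriangular_bandMatrix_consecutiveColumns (hu : ∀ j i, 0 < u j i) {x : Fin c → S}
    {l : Fin c} (hx : ∀ m < l, x m = 0) :
    ((bandMatrix x u).submatrix id (consecutiveColumns t l)).IsUpperTriangular := by
  intro i j (hji : j < i)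
  simp only [Matrix.submatrix_apply, id, bandMatrix]
  split_ifs with hband
  · have hlt : (consecutiveColumns t l j : ℕ) - i < l := by
      rw [consecutiveColumns_val] at hband ⊢
      omega
    rw [hx _ hlt, zero_pow (hu _ _).ne']
  · rfl

theorem det_bandMatrix_consecutiveColumns (hu : ∀ j i, 0 < u j i) {x : Fin c → S} {l : Fin c}
    (hx : ∀ m < l, x m = 0) :
    ((bandMatrix x u).submatrix id (consecutiveColumns t l)).det =
      x l ^ ∑ i, u (consecutiveColumns t l i) i := by
  rw [Matrix.det_of_isUpperTriangular (isUpperTriangular_bandMatrix_consecutiveColumns hu hx),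
    ← Finset.prod_pow_eq_pow_sum]
  exact Finset.prod_congr rfl fun i _ ↦ bandMatrix_consecutiveColumns_self x l i

theorem maximalMinors_bandMatrix_eq_bot_iff [IsReduced S] (ht : 0 < t) (hu : ∀ j i, 0 < u j i)
    {x : Fin c → S} : maximalMinors (bandMatrix x u) = ⊥ ↔ x = 0 := by
  refine ⟨fun h ↦ funext fun l ↦ ?_, ?_⟩
  · induction l using WellFoundedLT.induction with
    | _ l ih =>
      have hdet : ((bandMatrix x u).submatrix id (consecutiveColumns t l)).det = 0 :=
        Ideal.span_eq_bot.1 h _ ⟨_, rfl⟩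
      rw [det_bandMatrix_consecutiveColumns hu ih] at hdet
      exact eq_zero_of_pow_eq_zero hdet
  · rintro rfl
    rw [bandMatrix_zero hu, maximalMinors_zero ht]

theorem maximalMinors_bandMatrix_le_iff (ht : 0 < t) (hu : ∀ j i, 0 < u j i) {x : Fin c → S}
    {J : Ideal S} (hJ : J.IsRadical) :
    maximalMinors (bandMatrix x u) ≤ J ↔ Ideal.span (Set.range x) ≤ J := by
  have : IsReduced (S ⧸ J) := J.isRadical_iff_quotient_reduced.1 hJ
  calc maximalMinors (bandMatrix x u) ≤ J
      ↔ maximalMinors (bandMatrix (Ideal.Quotient.mk J ∘ x) u) = ⊥ := by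
        rw [← bandMatrix_map, ← map_maximalMinors, Ideal.map_eq_bot_iff_le_ker, Ideal.mk_ker]
    _ ↔ Ideal.Quotient.mk J ∘ x = 0 := maximalMinors_bandMatrix_eq_bot_iff ht hu
    _ ↔ Ideal.span (Set.range x) ≤ J := by
        simp [funext_iff, Ideal.span_le, Set.range_subset_iff, Ideal.Quotient.eq_zero_iff_mem]

theorem radical_maximalMinors_bandMatrix (ht : 0 < t) (hu : ∀ j i, 0 < u j i) (x : Fin c → S) :
    (maximalMinors (bandMatrix x u)).radical = (Ideal.span (Set.range x)).radical := by
  have key {J : Ideal S} (hJ : J.IsRadical) := maximalMinors_bandMatrix_le_iff ht hu (x := x) hJ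
  apply le_antisymm
  · rw [(Ideal.radical_isRadical _).radical_le_iff, key (Ideal.radical_isRadical _)]
    exact Ideal.le_radical
  · rw [(Ideal.radical_isRadical _).radical_le_iff, ← key (Ideal.radical_isRadical _)]
    exact Ideal.le_radical

end BandMatrix

section Height

theorem idealHeight_eq_height {S : Type*} [CommRing S] (I : Ideal S) :
    idealHeight I = I.height := by
  simp only [idealHeight, ← PrimeSpectrum.height_eq_orderHeight]
  apply le_antisymm
  · rw [I.height_eq_inf_minimalPrimes]
    exact le_iInf₂ fun J hJ ↦ iInf₂_le (⟨J, hJ.isPrime⟩ : PrimeSpectrum S) hJ.le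
  · exact le_iInf₂ fun P hP ↦ Ideal.height_mono hP

theorem height_radical {S : Type*} [CommRing S] (I : Ideal S) : I.radical.height = I.height := by
  rw [Ideal.height_eq_inf_minimalPrimes, Ideal.radical_minimalPrimes,
    ← Ideal.height_eq_inf_minimalPrimes]

variable {σ R : Type*} [CommRing R]

theorem exists_isPrime_lt_of_X_mem (P : Ideal (MvPolynomial σ R)) [P.IsPrime] {a : σ}
    (ha : X a ∈ P) :
    ∃ Q < P, Q.IsPrime ∧ ∀ i ≠ a, X i ∈ P → X i ∈ Q := by
  classical
  let φ : MvPolynomial σ R →ₐ[R] Polynomial (MvPolynomial σ R ⧸ P) :=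
    aeval fun i ↦ if i = a then Polynomial.X else Polynomial.C (Ideal.Quotient.mk P (X i))
  have eval_φ (f : MvPolynomial σ R) : (φ f).eval 0 = Ideal.Quotient.mk P f := by
    have hcomp : ((Polynomial.aeval (0 : MvPolynomial σ R ⧸ P)).restrictScalars R).comp φ =
        Ideal.Quotient.mkₐ R P := by
      ext i
      by_cases hi : i = a
      · simp [φ, hi, Ideal.Quotient.eq_zero_iff_mem.2 ha]
      · simp [φ, hi]
    exact DFunLike.congr_fun hcomp f
  have hle : RingHom.ker φ ≤ P := fun f hf ↦ by
    rw [← Ideal.Quotient.eq_zero_iff_mem, ← eval_φ, RingHom.mem_ker.1 hf, Polynomial.eval_zero]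
  have ha' : X a ∉ RingHom.ker φ := by simp [φ, RingHom.mem_ker]
  refine ⟨RingHom.ker φ, lt_of_le_of_ne hle fun h ↦ ha' (h.symm ▸ ha), RingHom.ker_isPrime φ,
    fun i hi hiP ↦ ?_⟩
  simp [φ, RingHom.mem_ker, hi, Ideal.Quotient.eq_zero_iff_mem.2 hiP]

theorem card_le_height_of_X_mem_of_isPrime (s : Finset σ) (P : Ideal (MvPolynomial σ R))
    [P.IsPrime] (hs : ∀ i ∈ s, X i ∈ P) : (s.card : ℕ∞) ≤ P.height := by
  classical
  induction s using Finset.induction_on generalizing P with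
  | empty => simp
  | insert a s has ih =>
    obtain ⟨Q, hQP, hQ, hXQ⟩ := exists_isPrime_lt_of_X_mem P (hs a (s.mem_insert_self a))
    have hsQ : ∀ i ∈ s, X i ∈ Q := fun i hi ↦
      hXQ i (ne_of_mem_of_not_mem hi has) (hs i (Finset.mem_insert_of_mem hi))
    calc ((insert a s).card : ℕ∞) = s.card + 1 := by simp [has]
      _ ≤ Q.height + 1 := by gcongr; exact ih Q hsQ
      _ ≤ P.height := Ideal.height_add_one_le_of_lt_of_isPrime hQP

theorem card_le_height_of_X_mem (s : Finset σ) (I : Ideal (MvPolynomial σ R))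
    (hs : ∀ i ∈ s, X i ∈ I) : (s.card : ℕ∞) ≤ I.height := by
  rw [I.height_eq_inf_minimalPrimes]
  refine le_iInf₂ fun P hP ↦ ?_
  have := hP.isPrime
  exact card_le_height_of_X_mem_of_isPrime s P fun i hi ↦ hP.le (hs i hi)

theorem idealOfVars_eq_ker_constantCoeff :
    idealOfVars σ R = RingHom.ker (constantCoeff : MvPolynomial σ R →+* R) := by
  ext f
  simpa [constantCoeff_eq, Finsupp.degree_eq_zero_iff] using mem_pow_idealOfVars_iff' 1 f

theorem isRadical_idealOfVars [IsReduced R] : (idealOfVars σ R).IsRadical := by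
  rw [idealOfVars_eq_ker_constantCoeff]
  have hsurj : Function.Surjective (constantCoeff : MvPolynomial σ R →+* R) :=
    fun a ↦ ⟨C a, constantCoeff_C σ a⟩
  exact (RingHom.ker_isRadical_iff_reduced_of_surjective hsurj).2 inferInstance

theorem height_idealOfVars [Finite σ] [Nontrivial R] [IsNoetherianRing R] :
    (idealOfVars σ R).height = Nat.card σ := by
  apply le_antisymm
  · have hne : idealOfVars σ R ≠ ⊤ := by
      rw [idealOfVars_eq_ker_constantCoeff]
      exact RingHom.ker_ne_top _
    calc (idealOfVars σ R).height
      _ ≤ (idealOfVars σ R).spanFinrank := Ideal.height_le_spanFinrank _ hne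
      _ ≤ (Set.range (X : σ → MvPolynomial σ R)).ncard := by
        exact_mod_cast Submodule.spanFinrank_span_le_ncard_of_finite (Set.finite_range _)
      _ = Nat.card σ := by
        rw [← Nat.card_coe_set_eq, Nat.card_range_of_injective (X_injective (R := R))]
  · have := Fintype.ofFinite σ
    rw [Nat.card_eq_fintype_card, ← Finset.card_univ]
    exact card_le_height_of_X_mem _ _ fun i _ ↦ Ideal.subset_span ⟨i, rfl⟩

end Height

theorem stmt_5_general {k : Type*} [CommRing k] [Nontrivial k] [IsReduced k] [IsNoetherianRing k]
    {c t : ℕ} (ht : 1 ≤ t) {u : Fin (t + c - 1) → Fin t → ℕ} (hupos : ∀ j i, 0 < u j i) :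
    (maximalMinors (bandMatrix (X : Fin c → MvPolynomial (Fin c) k) u)).radical =
      Ideal.span (Set.range (X : Fin c → MvPolynomial (Fin c) k)) ∧
    idealHeight (maximalMinors (bandMatrix (X : Fin c → MvPolynomial (Fin c) k) u)) = (c : ℕ∞) := by
  have hrad := (radical_maximalMinors_bandMatrix ht hupos X).trans
    (isRadical_idealOfVars (σ := Fin c) (R := k)).radical
  refine ⟨hrad, ?_⟩
  rw [idealHeight_eq_height, ← height_radical, hrad, height_idealOfVars, Nat.card_fin]

/-- The radical of the determinantal ideal `I(A)` is the ideal `(x_1, …, x_c)` generated by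
all the variables; in particular `I(A)` has height (codimension) `c`. -/
theorem stmt_5 {k : Type*} [Field k] (c t : ℕ) (hc : 1 ≤ c) (ht : 1 ≤ t)
    (u : Fin (t + c - 1) → Fin t → ℕ)
    (hupos : ∀ j i, 0 < u j i)
    (hurow : ∀ (j j' : Fin (t + c - 1)) (i : Fin t), j ≤ j' → u j i ≤ u j' i)
    (hucol : ∀ (j : Fin (t + c - 1)) (i i' : Fin t), i ≤ i' → u j i ≤ u j i')
    (A : Matrix (Fin t) (Fin (t + c - 1)) (MvPolynomial (Fin c) k))
    (hA : ∀ i j, A i j =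
      if h : i.1 ≤ j.1 ∧ j.1 < i.1 + c
      then X (⟨j.1 - i.1, by omega⟩ : Fin c) ^ u j i else 0) :
    (maximalMinors A).radical =
      Ideal.span (Set.range (X : Fin c → MvPolynomial (Fin c) k)) ∧
    idealHeight (maximalMinors A) = (c : ℕ∞) := by
  obtain rfl : A = bandMatrix X u := Matrix.ext hA
  exact stmt_5_general ht hupos
end

section
/- For every r with 0 ≤ r ≤ c−1, the determinant of the t×t submatrix of A consisting of columns r+1, r+2, …, r+t is congruent to x_{r+1}^{N_r} modulo the ideal (x_1, …, x_r) of R, where N_r = Σ_{i=1}^{t} u_{r+i,i} (for r = 0 this congruence is an equality: the determinant of the submatrix on the first t columns equals x_1^{N_0}). -/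
open MvPolynomial Matrix

/-! Modulo `(x_1, …, x_r)` every entry `x_{j-i+1}^u` with `j - i < r` vanishes, so the minor on
columns `r+1, …, r+t` becomes upper triangular, with powers of `x_{r+1}` on its diagonal. -/

theorem det_sub_prod_diag_mem {m R : Type*} [CommRing R] [Fintype m] [LinearOrder m] {I : Ideal R}
    {M : Matrix m m R} (hM : ∀ ⦃i j⦄, j < i → M i j ∈ I) : M.det - ∏ i, M i i ∈ I := by
  have hupper : ((Ideal.Quotient.mk I).mapMatrix M).IsUpperTriangular := fun _ _ hij =>
    Ideal.Quotient.eq_zero_iff_mem.mpr (hM hij)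
  rw [← Ideal.Quotient.mk_eq_mk_iff_sub_mem, RingHom.map_det, det_of_isUpperTriangular hupper,
    map_prod]
  rfl

section PowerBand

variable {R : Type*} [CommRing R] {c m n t : ℕ}

/-- The `m × n` matrix with `(i, j)` entry `x_{j-i} ^ u_{j,i}` on the band `i ≤ j < i + c`, indices
starting at `0`. It is the matrix of the paper for `m = t`, `n = t + c - 1` and `x` the sequence of
variables; as in the paper, `u` takes the column index first. -/
def powerBand (x : Fin c → R) (u : Fin n → Fin m → ℕ) : Matrix (Fin m) (Fin n) R :=
  fun i j => if h : i.1 ≤ j.1 ∧ j.1 < i.1 + c then x ⟨j.1 - i.1, by omega⟩ ^ u j i else 0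

theorem powerBand_eq_zero_of_lt (x : Fin c → R) (u : Fin n → Fin m → ℕ) {i : Fin m} {j : Fin n}
    (hji : j.1 < i.1) : powerBand x u i j = 0 :=
  dif_neg (by omega)

theorem powerBand_mem_span_of_lt (x : Fin c → R) {u : Fin n → Fin m → ℕ} {r : ℕ} {i : Fin m}
    {j : Fin n} (hu : 0 < u j i) (hji : j.1 < r + i.1) :
    powerBand x u i j ∈ Ideal.span (x '' {l | l.1 < r}) := by
  unfold powerBand
  split_ifs with hband
  · have hindex : j.1 - i.1 < r := by omega
    exact Ideal.pow_mem_of_mem _ (Ideal.subset_span (Set.mem_image_of_mem x hindex)) _ hu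
  · exact zero_mem _

/-- The `j`-th column index, counted from `0`, of the window of `t` consecutive columns of
`powerBand` that starts at column `r`. -/
def windowCol {r : ℕ} (hr : r < c) (j : Fin t) : Fin (t + c - 1) :=
  ⟨r + j.1, by omega⟩

variable (x : Fin c → R) (u : Fin (t + c - 1) → Fin t → ℕ) {r : ℕ} (hr : r < c)

theorem powerBand_windowCol_self (i : Fin t) :
    powerBand x u i (windowCol hr i) = x ⟨r, hr⟩ ^ u (windowCol hr i) i := by
  have hband : i.1 ≤ (windowCol hr i).1 ∧ (windowCol hr i).1 < i.1 + c := by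
    simp only [windowCol]; omega
  have hindex : (windowCol hr i).1 - i.1 = r := Nat.add_sub_cancel ..
  simp only [powerBand, dif_pos hband, hindex]

theorem prod_powerBand_windowCol_self :
    ∏ i, powerBand x u i (windowCol hr i) = x ⟨r, hr⟩ ^ (∑ i, u (windowCol hr i) i) := by
  simp only [powerBand_windowCol_self, Finset.prod_pow_eq_pow_sum]

theorem det_powerBand_window_sub_pow_mem_span (hu : ∀ j i, 0 < u j i) :
    ((powerBand x u).submatrix id (windowCol hr)).det -
      x ⟨r, hr⟩ ^ (∑ i, u (windowCol hr i) i) ∈ Ideal.span (x '' {l | l.1 < r}) := by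
  rw [← prod_powerBand_windowCol_self]
  exact det_sub_prod_diag_mem fun _ _ hji =>
    powerBand_mem_span_of_lt x (hu _ _) (Nat.add_lt_add_left hji r)

theorem det_powerBand_window_zero (hc : 0 < c) :
    ((powerBand x u).submatrix id (windowCol hc)).det =
      x ⟨0, hc⟩ ^ (∑ i, u (windowCol hc i) i) := by
  have hupper : ((powerBand x u).submatrix id (windowCol hc)).IsUpperTriangular :=
    fun i j (hji : j < i) => powerBand_eq_zero_of_lt x u ((Nat.zero_add j.1).trans_lt hji)
  rw [det_of_isUpperTriangular hupper, ← prod_powerBand_windowCol_self]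
  rfl

theorem stmt_6_general (hu : ∀ j i, 0 < u j i) :
    ((powerBand x u).submatrix id (windowCol hr)).det -
        x ⟨r, hr⟩ ^ (∑ i, u (windowCol hr i) i) ∈ Ideal.span (x '' {l | l.1 < r}) ∧
      (r = 0 → ((powerBand x u).submatrix id (windowCol hr)).det =
        x ⟨r, hr⟩ ^ (∑ i, u (windowCol hr i) i)) := by
  refine ⟨det_powerBand_window_sub_pow_mem_span x u hr hu, ?_⟩
  rintro rfl
  exact det_powerBand_window_zero x u hr

end PowerBand

/-- For `0 ≤ r ≤ c-1`, the determinant of the `t × t` submatrix of `A` on columns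
`r+1, …, r+t` is congruent to `x_{r+1}^{N_r}` modulo the ideal `(x_1, …, x_r)`, where
`N_r = Σ_{i=1}^t u_{r+i,i}`; for `r = 0` the congruence is an equality. -/
theorem stmt_6 {k : Type*} [Field k] (c t : ℕ) (hc : 1 ≤ c) (ht : 1 ≤ t)
    (u : Fin (t + c - 1) → Fin t → ℕ)
    (hupos : ∀ j i, 0 < u j i)
    (hurow : ∀ (j j' : Fin (t + c - 1)) (i : Fin t), j ≤ j' → u j i ≤ u j' i)
    (hucol : ∀ (j : Fin (t + c - 1)) (i i' : Fin t), i ≤ i' → u j i ≤ u j i')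
    (A : Matrix (Fin t) (Fin (t + c - 1)) (MvPolynomial (Fin c) k))
    (hA : ∀ i j, A i j =
      if h : i.1 ≤ j.1 ∧ j.1 < i.1 + c
      then X (⟨j.1 - i.1, by omega⟩ : Fin c) ^ u j i else 0)
    (r : ℕ) (hr : r ≤ c - 1) :
    (A.submatrix id
        (fun j : Fin t => (⟨r + j.1, by have := j.isLt; omega⟩ : Fin (t + c - 1)))).det -
      X (⟨r, by omega⟩ : Fin c) ^
        (∑ i : Fin t, u (⟨r + i.1, by have := i.isLt; omega⟩ : Fin (t + c - 1)) i) ∈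
      Ideal.span ((X : Fin c → MvPolynomial (Fin c) k) '' {j : Fin c | j.1 < r}) ∧
    (r = 0 →
      (A.submatrix id
          (fun j : Fin t => (⟨r + j.1, by have := j.isLt; omega⟩ : Fin (t + c - 1)))).det =
        X (⟨r, by omega⟩ : Fin c) ^
          (∑ i : Fin t, u (⟨r + i.1, by have := i.isLt; omega⟩ : Fin (t + c - 1)) i)) := by
  obtain rfl : A = powerBand X u := Matrix.ext hA
  exact stmt_6_general X u (by omega) hupos
end

section
/- Let c ≥ 1 and let m_1,…,m_c, m'_1,…,m'_c, u_1,…,u_c be nonnegative real numbers such that m_i = m'_i + u_i for all 1 ≤ i ≤ c, u_i ≤ u_c for all 1 ≤ i ≤ c, and m_i ≥ m'_{i+1} for all 1 ≤ i ≤ c−1. Then ∏_{i=1}^{c} m_i ≤ ∏_{i=1}^{c} m'_i + c · u_c · ∏_{i=1}^{c−1} m_i. -/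
/-!
Replacing the factors `m i` by `m' i` one at a time, from the last to the first, the step at `i`
costs at most `u i * (∏ j < i, m j) * (∏ j > i, m' j)`. Shifting the second product by one index
with `m' (j + 1) ≤ m j` bounds this by `u i` times the product of all `m j` but the last, and these
costs add up to `(∑ i, u i) * ∏ j < c, m j`, where `∑ i, u i ≤ c * u c`.
-/

section OrderedSemiring

variable {R : Type*} [CommSemiring R] [PartialOrder R] [IsOrderedRing R]

theorem mul_mul_le_mul_add_add_mul {p q s a x y v : R} (hp : 0 ≤ p) (hs : 0 ≤ s) (hy : 0 ≤ y)
    (hya : y ≤ a) (hx : x ≤ y + v) (hpa : p * a ≤ q + s * p) :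
    p * a * x ≤ q * y + (s + v) * (p * a) := by
  have ha : 0 ≤ a := hy.trans hya
  calc p * a * x
      ≤ p * a * (y + v) := by gcongr
    _ = p * a * y + v * (p * a) := by ring
    _ ≤ (q + s * p) * y + v * (p * a) := by gcongr
    _ = q * y + s * (p * y) + v * (p * a) := by ring
    _ ≤ q * y + s * (p * a) + v * (p * a) := by gcongr
    _ = q * y + (s + v) * (p * a) := by ring

theorem stmt_10_general (n : ℕ) {m m' u : ℕ → R}
    (hm' : ∀ i, 1 ≤ i → i ≤ n → 0 ≤ m' (i + 1))
    (hu : ∀ i, 1 ≤ i → i ≤ n → 0 ≤ u i)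
    (hadd : ∀ i, 1 ≤ i → i ≤ n + 1 → m i ≤ m' i + u i)
    (hdom : ∀ i, 1 ≤ i → i ≤ n → m' (i + 1) ≤ m i) :
    ∏ i ∈ Finset.Icc 1 (n + 1), m i ≤
      (∏ i ∈ Finset.Icc 1 (n + 1), m' i) +
        (∑ i ∈ Finset.Icc 1 (n + 1), u i) * ∏ i ∈ Finset.Icc 1 n, m i := by
  induction n with
  | zero => simpa using hadd 1 le_rfl le_rfl
  | succ n ih =>
    specialize ih (fun i h₁ h₂ => hm' i h₁ (by lia)) (fun i h₁ h₂ => hu i h₁ (by lia))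
      (fun i h₁ h₂ => hadd i h₁ (by lia)) (fun i h₁ h₂ => hdom i h₁ (by lia))
    have hprod : 0 ≤ ∏ i ∈ Finset.Icc 1 n, m i := Finset.prod_nonneg fun i hi => by
      obtain ⟨h₁, h₂⟩ := Finset.mem_Icc.mp hi
      exact (hm' i h₁ (by lia)).trans (hdom i h₁ (by lia))
    have hsum : 0 ≤ ∑ i ∈ Finset.Icc 1 (n + 1), u i :=
      Finset.sum_nonneg fun i hi => (Finset.mem_Icc.mp hi).elim (hu i)
    have hlast : ∏ i ∈ Finset.Icc 1 (n + 1), m i = (∏ i ∈ Finset.Icc 1 n, m i) * m (n + 1) :=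
      Finset.prod_Icc_succ_top (by lia) m
    rw [Finset.prod_Icc_succ_top (by lia) m, Finset.prod_Icc_succ_top (by lia) m',
      Finset.sum_Icc_succ_top (by lia), hlast]
    exact mul_mul_le_mul_add_add_mul hprod hsum (hm' _ (by lia) le_rfl) (hdom _ (by lia) le_rfl)
      (hadd _ (by lia) le_rfl) (hlast ▸ ih)

end OrderedSemiring

/-- If `m_i = m'_i + u_i` with everything nonnegative, `u_i ≤ u_c` for `1 ≤ i ≤ c`, and
`m_i ≥ m'_{i+1}` for `1 ≤ i ≤ c-1`, then
`∏_{i=1}^c m_i ≤ ∏_{i=1}^c m'_i + c · u_c · ∏_{i=1}^{c-1} m_i` (empty products are `1`). -/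
theorem stmt_10 (c : ℕ) (hc : 1 ≤ c) (m m' u : ℕ → ℝ)
    (hm : ∀ i, 1 ≤ i → i ≤ c → 0 ≤ m i)
    (hm' : ∀ i, 1 ≤ i → i ≤ c → 0 ≤ m' i)
    (hu : ∀ i, 1 ≤ i → i ≤ c → 0 ≤ u i)
    (hsum : ∀ i, 1 ≤ i → i ≤ c → m i = m' i + u i)
    (huc : ∀ i, 1 ≤ i → i ≤ c → u i ≤ u c)
    (hdom : ∀ i, 1 ≤ i → i ≤ c - 1 → m i ≥ m' (i + 1)) :
    ∏ i ∈ Finset.Icc 1 c, m i ≤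
      (∏ i ∈ Finset.Icc 1 c, m' i) + c * u c * ∏ i ∈ Finset.Icc 1 (c - 1), m i := by
  obtain ⟨n, rfl⟩ := Nat.exists_eq_add_of_le' hc
  have hsum_le : ∑ i ∈ Finset.Icc 1 (n + 1), u i ≤ (n + 1 : ℕ) * u (n + 1) := by
    simpa using Finset.sum_le_card_nsmul (Finset.Icc 1 (n + 1)) u (u (n + 1)) (by simpa using huc)
  have hprod : 0 ≤ ∏ i ∈ Finset.Icc 1 n, m i :=
    Finset.prod_nonneg fun i hi => hm i (by grind) (by grind)
  exact (stmt_10_general n (fun i _ _ => hm' _ (by lia) (by lia)) (fun i h₁ _ => hu i h₁ (by lia))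
    (fun i h₁ h₂ => (hsum i h₁ h₂).le) hdom).trans
      (add_le_add_right (mul_le_mul_of_nonneg_right hsum_le hprod) _)
end

section
/- Let c ≥ 1 and let M_1,…,M_c, M''_1,…,M''_c, v_1,…,v_c be nonnegative real numbers such that M_i = M''_i + v_i for all 1 ≤ i ≤ c, v_c ≤ v_i for all 1 ≤ i ≤ c, and M_i ≤ M''_{i+1} for all 1 ≤ i ≤ c−1. Then ∏_{i=1}^{c} M_i ≥ ∏_{i=1}^{c} M''_i + c · v_c · ∏_{i=1}^{c−1} M_i. -/
/-!
Replacing the factors `M''_i` by `M_i` from the left, one at a time, gives the telescoping identity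
`∏ M_i - ∏ M''_i = ∑_k v_k · ∏_{i < k} M_i · ∏_{i > k} M''_i`. Since `M_i ≤ M''_{i+1}`, the `k`-th
summand is at least `v_k · ∏_{i < c} M_i`, and `∑_k v_k ≥ c · v_c`. Carrying out the telescoping as
an induction on the right endpoint avoids subtraction.
-/

section OrderedSemiring

variable {R : Type*} [CommSemiring R] [PartialOrder R] [IsOrderedRing R]

theorem prod_Icc_add_sum_Icc_mul_prod_Ico_le_prod_Icc {a b : ℕ} (hab : a ≤ b) {f g m : ℕ → R}
    (hm : ∀ i ∈ Finset.Ico a b, 0 ≤ m i)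
    (hg : ∀ i ∈ Finset.Ico a b, 0 ≤ g i)
    (hfgm : ∀ i ∈ Finset.Icc a b, f i + g i ≤ m i)
    (hmf : ∀ i ∈ Finset.Ico a b, m i ≤ f (i + 1)) :
    ∏ i ∈ Finset.Icc a b, f i + (∑ i ∈ Finset.Icc a b, g i) * ∏ i ∈ Finset.Ico a b, m i ≤
      ∏ i ∈ Finset.Icc a b, m i := by
  induction b, hab using Nat.le_induction with
  | base => simpa using hfgm a (by simp)
  | succ b hab ih =>
    rw [Finset.Ico_add_one_right_eq_Icc] at hm hg hmf ⊢
    have hsub : Finset.Ico a b ⊆ Finset.Icc a b := Finset.Ico_subset_Icc_self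
    have ih := ih (fun i hi ↦ hm i (hsub hi)) (fun i hi ↦ hg i (hsub hi))
      (fun i hi ↦ hfgm i (by grind)) (fun i hi ↦ hmf i (hsub hi))
    have hb : b ∈ Finset.Icc a b := Finset.right_mem_Icc.2 hab
    have hstep : m b ≤ f (b + 1) := hmf b hb
    have hf : 0 ≤ f (b + 1) := (hm b hb).trans hstep
    have hlast : f (b + 1) + g (b + 1) ≤ m (b + 1) := hfgm (b + 1) (by grind)
    have hsum : 0 ≤ ∑ i ∈ Finset.Icc a b, g i := Finset.sum_nonneg hg
    have hIco : 0 ≤ ∏ i ∈ Finset.Ico a b, m i := Finset.prod_nonneg fun i hi ↦ hm i (hsub hi)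
    have hIcc : 0 ≤ ∏ i ∈ Finset.Icc a b, m i := Finset.prod_nonneg hm
    have hsplit : (∏ i ∈ Finset.Ico a b, m i) * m b = ∏ i ∈ Finset.Icc a b, m i :=
      Finset.prod_Ico_mul_eq_prod_Icc hab
    rw [Finset.prod_Icc_succ_top (by lia), Finset.prod_Icc_succ_top (by lia),
      Finset.sum_Icc_succ_top (by lia)]
    set F := ∏ i ∈ Finset.Icc a b, f i
    set G := ∑ i ∈ Finset.Icc a b, g i
    set P := ∏ i ∈ Finset.Icc a b, m i
    set Q := ∏ i ∈ Finset.Ico a b, m i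
    calc F * f (b + 1) + (G + g (b + 1)) * P
        = F * f (b + 1) + G * (Q * m b) + P * g (b + 1) := by rw [hsplit]; ring
      _ ≤ F * f (b + 1) + G * (Q * f (b + 1)) + P * g (b + 1) := by gcongr
      _ = (F + G * Q) * f (b + 1) + P * g (b + 1) := by ring
      _ ≤ P * f (b + 1) + P * g (b + 1) := by gcongr
      _ = P * (f (b + 1) + g (b + 1)) := (mul_add ..).symm
      _ ≤ P * m (b + 1) := by gcongr

theorem stmt_11_general (c : ℕ) (hc : 1 ≤ c) (M M'' v : ℕ → R)
    (hM : ∀ i ∈ Finset.Ico 1 c, 0 ≤ M i)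
    (hv : 0 ≤ v c)
    (hsum : ∀ i ∈ Finset.Icc 1 c, M'' i + v i ≤ M i)
    (hvc : ∀ i ∈ Finset.Icc 1 c, v c ≤ v i)
    (hdom : ∀ i ∈ Finset.Ico 1 c, M i ≤ M'' (i + 1)) :
    (∏ i ∈ Finset.Icc 1 c, M'' i) + c * v c * ∏ i ∈ Finset.Ico 1 c, M i ≤
      ∏ i ∈ Finset.Icc 1 c, M i := by
  have hprod : 0 ≤ ∏ i ∈ Finset.Ico 1 c, M i := Finset.prod_nonneg hM
  have hcv : c * v c ≤ ∑ i ∈ Finset.Icc 1 c, v i := by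
    simpa using Finset.card_nsmul_le_sum (Finset.Icc 1 c) v (v c) hvc
  have hv_nonneg : ∀ i ∈ Finset.Ico 1 c, 0 ≤ v i := fun i hi ↦
    hv.trans (hvc i (Finset.Ico_subset_Icc_self hi))
  calc (∏ i ∈ Finset.Icc 1 c, M'' i) + c * v c * ∏ i ∈ Finset.Ico 1 c, M i
      ≤ ∏ i ∈ Finset.Icc 1 c, M'' i + (∑ i ∈ Finset.Icc 1 c, v i) * ∏ i ∈ Finset.Ico 1 c, M i := by
        gcongr
    _ ≤ ∏ i ∈ Finset.Icc 1 c, M i :=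
        prod_Icc_add_sum_Icc_mul_prod_Ico_le_prod_Icc hc hM hv_nonneg hsum hdom

end OrderedSemiring

/-- If `M_i = M''_i + v_i` with everything nonnegative, `v_c ≤ v_i` for `1 ≤ i ≤ c`, and
`M_i ≤ M''_{i+1}` for `1 ≤ i ≤ c-1`, then
`∏_{i=1}^c M_i ≥ ∏_{i=1}^c M''_i + c · v_c · ∏_{i=1}^{c-1} M_i` (empty products are `1`). -/
theorem stmt_11 (c : ℕ) (hc : 1 ≤ c) (M M'' v : ℕ → ℝ)
    (hM : ∀ i, 1 ≤ i → i ≤ c → 0 ≤ M i)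
    (hM'' : ∀ i, 1 ≤ i → i ≤ c → 0 ≤ M'' i)
    (hv : ∀ i, 1 ≤ i → i ≤ c → 0 ≤ v i)
    (hsum : ∀ i, 1 ≤ i → i ≤ c → M i = M'' i + v i)
    (hvc : ∀ i, 1 ≤ i → i ≤ c → v c ≤ v i)
    (hdom : ∀ i, 1 ≤ i → i ≤ c - 1 → M i ≤ M'' (i + 1)) :
    ∏ i ∈ Finset.Icc 1 c, M i ≥
      (∏ i ∈ Finset.Icc 1 c, M'' i) + c * v c * ∏ i ∈ Finset.Icc 1 (c - 1), M i := by
  have hIcc : Finset.Icc 1 (c - 1) = Finset.Ico 1 c :=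
    Finset.Icc_sub_one_right_eq_Ico_of_not_isMin (not_isMin_of_lt hc) 1
  exact hIcc ▸
    stmt_11_general c hc M M'' v (by grind) (hv c hc le_rfl) (by grind) (by grind) (by grind)
end

section
/- Let c ≥ 1 and let m_1,…,m_c, m'_1,…,m'_c, u_1,…,u_c be nonnegative real numbers such that m_i = m'_i + u_i for all 1 ≤ i ≤ c, u_i ≤ u_c for all 1 ≤ i ≤ c, and m_i ≥ m'_{i+1} for all 1 ≤ i ≤ c−1. Suppose e, e', e_J are real numbers with e = e' + u_c · e_J, c! · e' ≥ ∏_{i=1}^{c} m'_i, and (c−1)! · e_J ≥ ∏_{i=1}^{c−1} m_i. Then c! · e ≥ ∏_{i=1}^{c} m_i. -/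
/-!
With `U = u c` we have `m i ≤ m' i + U` for every `i`. Replacing `m' i` by `m i` one index at a
time, from the bottom up, therefore increases the product by at most
`U * (∏ j < i, m j) * ∏ j > i, m' j`. Since `m' (j + 1) ≤ m j`, shifting the second product down by
one bounds this by `U * ∏ j < c, m j`, independently of `i`. Hence
`∏ m ≤ ∏ m' + c * U * ∏ j < c, m j`, and the two multiplicity bounds add up because
`c * (c - 1)! = c!`.
-/

section IntervalProducts

open Finset

variable {R : Type*} [CommSemiring R] [PartialOrder R] [IsOrderedRing R]

theorem mul_le_mul_add_succ_nsmul {k : ℕ} {F P U x y z : R} (hU : 0 ≤ U) (hP : 0 ≤ P)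
    (hx : 0 ≤ x) (hyx : y ≤ x + U) (hxz : x ≤ z) (hPz : P * z ≤ F + k • (U * P)) :
    P * z * y ≤ F * x + (k + 1) • (U * (P * z)) := by
  have hz : 0 ≤ z := hx.trans hxz
  calc P * z * y
      ≤ P * z * (x + U) := by gcongr
    _ = P * z * x + U * (P * z) := by ring
    _ ≤ (F + k • (U * P)) * x + U * (P * z) := by gcongr
    _ = F * x + k • (U * (P * x)) + U * (P * z) := by simp only [nsmul_eq_mul]; ring
    _ ≤ F * x + k • (U * (P * z)) + U * (P * z) := by gcongr
    _ = F * x + (k + 1) • (U * (P * z)) := by rw [succ_nsmul, add_assoc]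

theorem prod_Icc_le_prod_Icc_add_card_nsmul {a n : ℕ} (han : a ≤ n) {f g : ℕ → R} {U : R}
    (hU : 0 ≤ U) (hf : ∀ i ∈ Ioc a n, 0 ≤ f i) (hgf : ∀ i ∈ Icc a n, g i ≤ f i + U)
    (hfg : ∀ i ∈ Ico a n, f (i + 1) ≤ g i) :
    ∏ i ∈ Icc a n, g i ≤ ∏ i ∈ Icc a n, f i + #(Icc a n) • (U * ∏ i ∈ Ico a n, g i) := by
  induction n, han using Nat.le_induction with
  | base => simpa using hgf
  | succ n han ih =>
    have ih : ∏ i ∈ Icc a n, g i ≤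
        ∏ i ∈ Icc a n, f i + #(Icc a n) • (U * ∏ i ∈ Ico a n, g i) :=
      ih (fun i hi => hf i (Ioc_subset_Ioc_right n.le_succ hi))
        (fun i hi => hgf i (Icc_subset_Icc_right n.le_succ hi))
        (fun i hi => hfg i (Ico_subset_Ico_right n.le_succ hi))
    have prod_Ico_nonneg : 0 ≤ ∏ i ∈ Ico a n, g i :=
      prod_nonneg fun i hi => (hf (i + 1) (by grind)).trans (hfg i (by grind))
    have card_succ : #(Icc a (n + 1)) = #(Icc a n) + 1 := by simp only [Nat.card_Icc]; lia
    rw [prod_Icc_succ_top (by lia), prod_Icc_succ_top (by lia), card_succ,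
      Ico_add_one_right_eq_Icc]
    rw [← prod_Ico_mul_eq_prod_Icc han] at ih ⊢
    exact mul_le_mul_add_succ_nsmul hU prod_Ico_nonneg (hf _ (by grind)) (hgf _ (by grind))
      (hfg n (by grind)) ih

theorem stmt_12_general {c : ℕ} (hc : 1 ≤ c) {m m' : ℕ → R} {U e' eJ : R} (hU : 0 ≤ U)
    (hm' : ∀ i ∈ Ioc 1 c, 0 ≤ m' i) (hmU : ∀ i ∈ Icc 1 c, m i ≤ m' i + U)
    (hdom : ∀ i ∈ Ico 1 c, m' (i + 1) ≤ m i)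
    (he' : ∏ i ∈ Icc 1 c, m' i ≤ (c.factorial : R) * e')
    (heJ : ∏ i ∈ Icc 1 (c - 1), m i ≤ ((c - 1).factorial : R) * eJ) :
    ∏ i ∈ Icc 1 c, m i ≤ (c.factorial : R) * (e' + U * eJ) := by
  rw [Icc_sub_one_right_eq_Ico_of_not_isMin (not_isMin_of_lt hc)] at heJ
  calc ∏ i ∈ Icc 1 c, m i
      ≤ ∏ i ∈ Icc 1 c, m' i + #(Icc 1 c) • (U * ∏ i ∈ Ico 1 c, m i) :=
        prod_Icc_le_prod_Icc_add_card_nsmul hc hU hm' hmU hdom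
    _ ≤ c.factorial * e' + #(Icc 1 c) • (U * ((c - 1).factorial * eJ)) := by gcongr
    _ = c.factorial * (e' + U * eJ) := by
        rw [Nat.card_Icc, Nat.add_sub_cancel, ← Nat.mul_factorial_pred (by lia : c ≠ 0),
          nsmul_eq_mul]
        push_cast
        ring

end IntervalProducts

/-- Inductive step for the lower multiplicity bound: with `m_i = m'_i + u_i` nonnegative,
`u_i ≤ u_c`, `m_i ≥ m'_{i+1}`, and real numbers `e = e' + u_c · e_J` with
`c! · e' ≥ ∏_{i=1}^c m'_i` and `(c-1)! · e_J ≥ ∏_{i=1}^{c-1} m_i`, one gets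
`c! · e ≥ ∏_{i=1}^c m_i` (empty products are `1`). -/
theorem stmt_12 (c : ℕ) (hc : 1 ≤ c) (m m' u : ℕ → ℝ)
    (hm : ∀ i, 1 ≤ i → i ≤ c → 0 ≤ m i)
    (hm' : ∀ i, 1 ≤ i → i ≤ c → 0 ≤ m' i)
    (hu : ∀ i, 1 ≤ i → i ≤ c → 0 ≤ u i)
    (hsum : ∀ i, 1 ≤ i → i ≤ c → m i = m' i + u i)
    (huc : ∀ i, 1 ≤ i → i ≤ c → u i ≤ u c)
    (hdom : ∀ i, 1 ≤ i → i ≤ c - 1 → m i ≥ m' (i + 1))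
    (e e' eJ : ℝ)
    (he : e = e' + u c * eJ)
    (he' : (Nat.factorial c : ℝ) * e' ≥ ∏ i ∈ Finset.Icc 1 c, m' i)
    (heJ : (Nat.factorial (c - 1) : ℝ) * eJ ≥ ∏ i ∈ Finset.Icc 1 (c - 1), m i) :
    (Nat.factorial c : ℝ) * e ≥ ∏ i ∈ Finset.Icc 1 c, m i := by
  subst he
  exact stmt_12_general hc (hu c hc le_rfl) (by grind) (by grind) (by grind) he' heJ
end

section
/- Let c ≥ 1 and let M_1,…,M_c, M''_1,…,M''_c, v_1,…,v_c be nonnegative real numbers such that M_i = M''_i + v_i for all 1 ≤ i ≤ c, v_c ≤ v_i for all 1 ≤ i ≤ c, and M_i ≤ M''_{i+1} for all 1 ≤ i ≤ c−1. Suppose e, e'', e_K are real numbers with e = e'' + v_c · e_K, c! · e'' ≤ ∏_{i=1}^{c} M''_i, and (c−1)! · e_K ≤ ∏_{i=1}^{c−1} M_i. Then c! · e ≤ ∏_{i=1}^{c} M_i. -/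
/-!
Put `w = v_c`. Since `M''_i + w ≤ M_i` and `M_i ≤ M''_{i+1}`, replacing the factors of `∏ M''_i` by
those of `∏ M_i` one at a time, from left to right, gains at each of the `c` replacements at least
`w ∏_{i<c} M_i`. Hence `∏_{i≤c} M''_i + c w ∏_{i<c} M_i ≤ ∏_{i≤c} M_i`, and the two summands on the
left are at least `c! e''` and `c! w e_K = c w (c-1)! e_K`.
-/

open Finset

section OrderedSemiring

variable {R : Type*} [CommSemiring R] [PartialOrder R] [IsOrderedRing R]

theorem prod_Icc_add_succ_mul_prod_Icc_le_prod_Icc {f g : ℕ → R} {w : R} {n : ℕ} (hw : 0 ≤ w)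
    (hg : ∀ i, 1 ≤ i → i ≤ n → 0 ≤ g i) (hfg : ∀ i, 1 ≤ i → i ≤ n + 1 → f i + w ≤ g i)
    (hgf : ∀ i, 1 ≤ i → i ≤ n → g i ≤ f (i + 1)) :
    ∏ i ∈ Icc 1 (n + 1), f i + (n + 1 : ℕ) * (w * ∏ i ∈ Icc 1 n, g i) ≤
      ∏ i ∈ Icc 1 (n + 1), g i := by
  induction n with
  | zero => simpa using hfg 1
  | succ k ih =>
    have ih := ih (fun i h₁ hi => hg i h₁ (by lia)) (fun i h₁ hi => hfg i h₁ (by lia))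
      (fun i h₁ hi => hgf i h₁ (by lia))
    have hgf_top : g (k + 1) ≤ f (k + 2) := hgf (k + 1) (by lia) le_rfl
    have hfg_top : f (k + 2) + w ≤ g (k + 2) := hfg (k + 2) (by lia) le_rfl
    have hf_nonneg : 0 ≤ f (k + 2) := (hg (k + 1) (by lia) le_rfl).trans hgf_top
    set P := ∏ i ∈ Icc 1 k, g i
    set Q := ∏ i ∈ Icc 1 (k + 1), g i
    have hQ : Q = P * g (k + 1) := prod_Icc_succ_top (by lia) g
    have hP_nonneg : 0 ≤ P :=
      prod_nonneg fun i hi => hg i (mem_Icc.mp hi).1 ((mem_Icc.mp hi).2.trans k.le_succ)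
    have hQ_nonneg : 0 ≤ Q :=
      prod_nonneg fun i hi => hg i (mem_Icc.mp hi).1 (mem_Icc.mp hi).2
    calc ∏ i ∈ Icc 1 (k + 2), f i + (k + 2 : ℕ) * (w * Q)
        = (∏ i ∈ Icc 1 (k + 1), f i) * f (k + 2) +
            (k + 1 : ℕ) * (w * P) * g (k + 1) + Q * w := by
          rw [prod_Icc_succ_top (by lia) f, hQ]; push_cast; ring
      _ ≤ (∏ i ∈ Icc 1 (k + 1), f i) * f (k + 2) +
            (k + 1 : ℕ) * (w * P) * f (k + 2) + Q * w := by gcongr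
      _ = (∏ i ∈ Icc 1 (k + 1), f i + (k + 1 : ℕ) * (w * P)) * f (k + 2) + Q * w := by
          rw [add_mul]
      _ ≤ Q * f (k + 2) + Q * w := by gcongr
      _ = Q * (f (k + 2) + w) := by rw [mul_add]
      _ ≤ Q * g (k + 2) := by gcongr
      _ = ∏ i ∈ Icc 1 (k + 2), g i := (prod_Icc_succ_top (by lia) g).symm

theorem stmt_13_general {n : ℕ} {M M'' : ℕ → R} {w e'' eK : R} (hw : 0 ≤ w)
    (hM : ∀ i, 1 ≤ i → i ≤ n → 0 ≤ M i)
    (hadd : ∀ i, 1 ≤ i → i ≤ n + 1 → M'' i + w ≤ M i)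
    (hdom : ∀ i, 1 ≤ i → i ≤ n → M i ≤ M'' (i + 1))
    (he'' : ((n + 1).factorial : R) * e'' ≤ ∏ i ∈ Icc 1 (n + 1), M'' i)
    (heK : (n.factorial : R) * eK ≤ ∏ i ∈ Icc 1 n, M i) :
    ((n + 1).factorial : R) * (e'' + w * eK) ≤ ∏ i ∈ Icc 1 (n + 1), M i :=
  calc ((n + 1).factorial : R) * (e'' + w * eK)
      = (n + 1).factorial * e'' + (n + 1 : ℕ) * (w * (n.factorial * eK)) := by
        rw [Nat.factorial_succ, Nat.cast_mul]; ring
    _ ≤ ∏ i ∈ Icc 1 (n + 1), M'' i + (n + 1 : ℕ) * (w * ∏ i ∈ Icc 1 n, M i) := by gcongr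
    _ ≤ ∏ i ∈ Icc 1 (n + 1), M i := prod_Icc_add_succ_mul_prod_Icc_le_prod_Icc hw hM hadd hdom

end OrderedSemiring

/-- Inductive step for the upper multiplicity bound: with `M_i = M''_i + v_i` nonnegative,
`v_c ≤ v_i`, `M_i ≤ M''_{i+1}`, and real numbers `e = e'' + v_c · e_K` with
`c! · e'' ≤ ∏_{i=1}^c M''_i` and `(c-1)! · e_K ≤ ∏_{i=1}^{c-1} M_i`, one gets
`c! · e ≤ ∏_{i=1}^c M_i` (empty products are `1`). -/
theorem stmt_13 (c : ℕ) (hc : 1 ≤ c) (M M'' v : ℕ → ℝ)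
    (hM : ∀ i, 1 ≤ i → i ≤ c → 0 ≤ M i)
    (hM'' : ∀ i, 1 ≤ i → i ≤ c → 0 ≤ M'' i)
    (hv : ∀ i, 1 ≤ i → i ≤ c → 0 ≤ v i)
    (hsum : ∀ i, 1 ≤ i → i ≤ c → M i = M'' i + v i)
    (hvc : ∀ i, 1 ≤ i → i ≤ c → v c ≤ v i)
    (hdom : ∀ i, 1 ≤ i → i ≤ c - 1 → M i ≤ M'' (i + 1))
    (e e'' eK : ℝ)
    (he : e = e'' + v c * eK)
    (he'' : (Nat.factorial c : ℝ) * e'' ≤ ∏ i ∈ Finset.Icc 1 c, M'' i)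
    (heK : (Nat.factorial (c - 1) : ℝ) * eK ≤ ∏ i ∈ Finset.Icc 1 (c - 1), M i) :
    (Nat.factorial c : ℝ) * e ≤ ∏ i ∈ Finset.Icc 1 c, M i := by
  obtain ⟨n, rfl⟩ := Nat.exists_eq_add_of_le' hc
  exact he ▸ stmt_13_general (hv _ hc le_rfl) (fun i h₁ hi => hM i h₁ (by lia))
    (fun i h₁ hi => by grw [hsum i h₁ hi, hvc i h₁ hi]) hdom he'' heK
end
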